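/- Degree-3 modular differential equation for the generator φ_{0,4}: with all heat operators taken with index m = 4, the weak Jacobi form φ_{0,4}(τ,z) = ϑ(τ,3z)/ϑ(τ,z) satisfies H^{(4)}_{4}(H^{(4)}_{2}(H^{(4)}_{0}(φ_{0,4})))(τ,z) − (107/16)·E₄(τ)·H^{(4)}_{0}(φ_{0,4})(τ,z) + (23/32)·E₆(τ)·φ_{0,4}(τ,z) = 0 at every point (τ,z) ∈ ℍ × ℂ with ϑ(τ,z) ≠ 0. -/

import Mathlib

/-!
Write `℘ = E₂/12 - (log ϑ)''`, derivatives being taken with respect to `2πiz`, and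
`K = (ϑ/ϑ'(0))⁸`. The proof shows that `φ_{0,4}` lies in the space of functions
`K·(c₀ + c₁℘ + ⋯ + c₄℘⁴)` with `cᵢ` polynomials in `E₄`, `E₆`, computes the modular heat operator
on this space, and compares coefficients.

* *Algebra of theta functions.* Splitting the double series of `ϑ(x+y)ϑ(x-y)` by parity writes it
  as a `2 × 2` determinant (`th_addition`), which yields the three-term relation
  (`th_three_term`). Every odd entire function satisfying that relation (`OddTheta`) has a
  Weierstrass function: expanding the relation gives `℘'² = 4℘³ - E₄℘/12 + E₆/216` (`wQ_sq`) and
  `ϑ(3z)/ϑ(z) = K·(3℘⁴ - E₄℘²/8 + E₆℘/72 - E₄²/2304)` (`triplication`), where `E₂`, `E₄`, `E₆`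
  stand for certain polynomials in `ϑ⁽ᵏ⁾(0)/ϑ'(0)` (`e2J`, `e4J`, `e6J`).

* *Identification of the Eisenstein series.* By the inversion formula these polynomials transform
  under `SL₂(ℤ)` like the Eisenstein series, and they tend to `1` at the cusp. The differences are
  cusp forms of level one and weight less than `12`, hence vanish (`Eis2_eq_e2J`, `Eis4_eq_e4J`,
  `Eis6_eq_e6J`).

* *Heat operator.* The heat equation for `ϑ` gives the `τ`-derivatives of `K` and `℘` (`KJ_tau`,
  `PJ_tau`) and Ramanujan's formulas for `E₂`, `E₄`, `E₆` (`e2J_tau`, `e4J_tau`, `e6J_tau`). With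
  these, `heat_step` expresses the modular heat operator through the coefficients `cᵢ` and their
  Serre derivatives. Applying it three times to `phi04_eq` gives the two heat terms of the equation
  in closed form, and their combination cancels identically.
-/

open Complex Real

noncomputable section

/-- The Jacobi theta series `ϑ(τ,z) = q^{1/8} ζ^{1/2} ∑_{n∈ℤ} (−1)^n q^{n(n+1)/2} ζ^n`
with `q = e^{2πiτ}`, `ζ = e^{2πiz}`. -/
def thetaJ (τ z : ℂ) : ℂ :=
  Complex.exp (π * I * τ / 4) * Complex.exp (π * I * z) *
    ∑' n : ℤ, (-1 : ℂ) ^ n * Complex.exp (π * I * τ * n * (n + 1)) *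
      Complex.exp (2 * π * I * z * n)

/-- The Dedekind eta function `η(τ) = q^{1/24} ∏_{n≥1} (1 − q^n)`. -/
def etaD (τ : ℂ) : ℂ :=
  Complex.exp (π * I * τ / 12) * ∏' n : ℕ, (1 - Complex.exp (2 * π * I * τ * (n + 1)))

/-- The divisor power sum `σ_k(n) = ∑_{d ∣ n} d^k`. -/
def sigmaD (k n : ℕ) : ℕ := ∑ d ∈ n.divisors, d ^ k

/-- The quasi-modular Eisenstein series `E₂`. -/
def Eis2 (τ : ℂ) : ℂ :=
  1 - 24 * ∑' n : ℕ, (sigmaD 1 (n + 1) : ℂ) * Complex.exp (2 * π * I * τ * (n + 1))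

/-- The Eisenstein series `E₄`. -/
def Eis4 (τ : ℂ) : ℂ :=
  1 + 240 * ∑' n : ℕ, (sigmaD 3 (n + 1) : ℂ) * Complex.exp (2 * π * I * τ * (n + 1))

/-- The Eisenstein series `E₆`. -/
def Eis6 (τ : ℂ) : ℂ :=
  1 - 504 * ∑' n : ℕ, (sigmaD 5 (n + 1) : ℂ) * Complex.exp (2 * π * I * τ * (n + 1))

/-- The heat operator `H^{(m)}φ = (12/(2πi)) ∂φ/∂τ + (3/(4π²m)) ∂²φ/∂z²` of index `m`. -/
def heatOp (m : ℚ) (φ : ℂ → ℂ → ℂ) (τ z : ℂ) : ℂ :=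
  12 / (2 * π * I) * deriv (fun t => φ t z) τ
    + 3 / (4 * π ^ 2 * (m : ℂ)) * deriv (deriv (φ τ)) z

/-- The modular heat operator `H^{(m)}_k φ = H^{(m)}φ − ((2k−1)/2)·E₂·φ`. -/
def heatMod (m k : ℚ) (φ : ℂ → ℂ → ℂ) (τ z : ℂ) : ℂ :=
  heatOp m φ τ z - (2 * (k : ℂ) - 1) / 2 * Eis2 τ * φ τ z

/-- The weak Jacobi form `φ_{0,4}(τ,z) = ϑ(τ,3z)/ϑ(τ,z)` of weight 0 and index 4. -/
def phi04 (τ z : ℂ) : ℂ := thetaJ τ (3 * z) / thetaJ τ z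

/-! ### The theta series and its derivatives -/

/-- The `n`-th summand of the `k`-th normalised `z`-derivative of `ϑ`. -/
def thTerm (k : ℕ) (τ z : ℂ) (n : ℤ) : ℂ :=
  (-1 : ℂ) ^ n * ((n : ℂ) + 1 / 2) ^ k *
    Complex.exp (π * I * τ * ((n : ℂ) + 1 / 2) ^ 2 + 2 * π * I * z * ((n : ℂ) + 1 / 2))

/-- The `k`-th derivative of `ϑ` with respect to `2πiz`, as a series. -/
def th (k : ℕ) (τ z : ℂ) : ℂ := ∑' n : ℤ, thTerm k τ z n

/-- A summable majorant of `thTerm k τ z` on `|Im z| ≤ S`, `T ≤ Im τ`. -/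
def thBound (k : ℕ) (S T : ℝ) (n : ℤ) : ℝ :=
  2 ^ k * Real.exp (π * S) *
    ((|n| ^ k : ℝ) * Real.exp (-π * (T / 4 * n ^ 2 - 2 * S * |n|)) +
      (|n| ^ 0 : ℝ) * Real.exp (-π * (T / 4 * n ^ 2 - 2 * S * |n|)))

lemma summable_thBound (k : ℕ) (S : ℝ) {T : ℝ} (hT : 0 < T) : Summable (thBound k S T) :=
  ((summable_pow_mul_jacobiTheta₂_term_bound S (by positivity : 0 < T / 4) k).add
    (summable_pow_mul_jacobiTheta₂_term_bound S (by positivity : 0 < T / 4) 0)).mul_left _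

lemma thTerm_norm (k : ℕ) (τ z : ℂ) (n : ℤ) :
    ‖thTerm k τ z n‖ = |(n : ℝ) + 1 / 2| ^ k *
      Real.exp (-π * (τ.im * ((n : ℝ) + 1 / 2) ^ 2 + 2 * z.im * ((n : ℝ) + 1 / 2))) := by
  have h1 : ((n : ℂ) + 1 / 2) = (((n : ℝ) + 1 / 2 : ℝ) : ℂ) := by push_cast; ring
  have h2 : ‖(-1 : ℂ) ^ n‖ = 1 := by simp
  rw [thTerm, norm_mul, norm_mul, h2, one_mul, norm_pow, h1, Complex.norm_real, Real.norm_eq_abs,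
    Complex.norm_exp]
  congr 2
  have h3 : (π * I * τ * (((n : ℝ) + 1 / 2 : ℝ) : ℂ) ^ 2 + 2 * π * I * z * (((n : ℝ) + 1 / 2 : ℝ) : ℂ))
      = ((π * ((n : ℝ) + 1 / 2) ^ 2 : ℝ) : ℂ) * τ * I
        + ((2 * π * ((n : ℝ) + 1 / 2) : ℝ) : ℂ) * z * I := by
    push_cast; ring
  rw [h3, add_re, mul_I_re, mul_I_re, im_ofReal_mul, im_ofReal_mul]
  ring

lemma thTerm_norm_le (k : ℕ) {S T : ℝ} (hT : 0 < T) {τ z : ℂ} (hz : |z.im| ≤ S) (hτ : T ≤ τ.im)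
    (n : ℤ) : ‖thTerm k τ z n‖ ≤ thBound k S T n := by
  have hS : 0 ≤ S := (abs_nonneg _).trans hz
  have hn1 : |(n : ℝ) + 1 / 2| ≤ |(n : ℝ)| + 1 / 2 :=
    (abs_add_le _ _).trans (by norm_num)
  have hsq : (n : ℝ) ^ 2 / 4 ≤ ((n : ℝ) + 1 / 2) ^ 2 := by
    have : (0 : ℤ) ≤ (3 * n + 1) * (n + 1) := by
      rcases le_or_gt 0 n with h | h
      · positivity
      · nlinarith
    have : (0 : ℝ) ≤ (3 * n + 1) * (n + 1) := by exact_mod_cast this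
    nlinarith
  have hexp : Real.exp (-π * (τ.im * ((n : ℝ) + 1 / 2) ^ 2 + 2 * z.im * ((n : ℝ) + 1 / 2))) ≤
      Real.exp (π * S) * Real.exp (-π * (T / 4 * n ^ 2 - 2 * S * |(n : ℝ)|)) := by
    rw [← Real.exp_add, Real.exp_le_exp]
    have h1 : T * ((n : ℝ) ^ 2 / 4) ≤ τ.im * ((n : ℝ) + 1 / 2) ^ 2 := by gcongr; linarith
    have h2 : |z.im * ((n : ℝ) + 1 / 2)| ≤ S * (|(n : ℝ)| + 1 / 2) := by
      rw [abs_mul]; gcongr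
    have h3 := (abs_le.mp h2).1
    have : 0 ≤ π * ((τ.im * ((n : ℝ) + 1 / 2) ^ 2 + 2 * z.im * ((n : ℝ) + 1 / 2))
        - (T / 4 * n ^ 2 - 2 * S * |(n : ℝ)|) + S) :=
      mul_nonneg pi_pos.le (by linarith)
    linarith
  have hpow : |(n : ℝ) + 1 / 2| ^ k ≤ 2 ^ k * (|(n : ℝ)| ^ k + 1) := by
    rcases eq_or_ne n 0 with rfl | h
    · simp only [Int.cast_zero, zero_add, abs_zero]
      have : |(1 / 2 : ℝ)| ^ k ≤ 1 := pow_le_one₀ (abs_nonneg _) (by norm_num [abs_le])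
      have h2 : (1 : ℝ) ≤ 2 ^ k := one_le_pow₀ (by norm_num)
      have h3 : (0 : ℝ) ≤ 0 ^ k := by positivity
      nlinarith
    · have h1 : (1 : ℝ) ≤ |(n : ℝ)| := by exact_mod_cast Int.one_le_abs h
      calc |(n : ℝ) + 1 / 2| ^ k ≤ (2 * |(n : ℝ)|) ^ k := by gcongr; linarith
        _ = 2 ^ k * |(n : ℝ)| ^ k := mul_pow _ _ _
        _ ≤ _ := by gcongr; linarith
  rw [thTerm_norm, thBound]
  calc _ ≤ (2 ^ k * (|(n : ℝ)| ^ k + 1)) *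
        (Real.exp (π * S) * Real.exp (-π * (T / 4 * n ^ 2 - 2 * S * |(n : ℝ)|))) := by gcongr
    _ = _ := by push_cast; ring

lemma summable_thTerm (k : ℕ) {τ : ℂ} (hτ : 0 < τ.im) (z : ℂ) : Summable (thTerm k τ z) :=
  (summable_thBound k |z.im| hτ).of_norm_bounded (thTerm_norm_le k hτ le_rfl le_rfl)

lemma thTerm_hasDerivAt_z (k : ℕ) (τ z : ℂ) (n : ℤ) :
    HasDerivAt (fun w => thTerm k τ w n) (2 * π * I * thTerm (k + 1) τ z n) z := by
  have h : HasDerivAt (fun w : ℂ => π * I * τ * ((n : ℂ) + 1 / 2) ^ 2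
      + 2 * π * I * w * ((n : ℂ) + 1 / 2)) (2 * π * I * ((n : ℂ) + 1 / 2)) z := by
    have := (((hasDerivAt_id z).const_mul (2 * π * I : ℂ)).mul_const ((n : ℂ) + 1 / 2)).const_add
      (π * I * τ * ((n : ℂ) + 1 / 2) ^ 2)
    simpa using this
  refine (h.cexp.const_mul ((-1 : ℂ) ^ n * ((n : ℂ) + 1 / 2) ^ k)).congr_deriv ?_
  rw [thTerm]; ring

lemma thTerm_hasDerivAt_tau (k : ℕ) (τ z : ℂ) (n : ℤ) :
    HasDerivAt (fun t => thTerm k t z n) (π * I * thTerm (k + 2) τ z n) τ := by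
  have h : HasDerivAt (fun w : ℂ => π * I * w * ((n : ℂ) + 1 / 2) ^ 2
      + 2 * π * I * z * ((n : ℂ) + 1 / 2)) (π * I * ((n : ℂ) + 1 / 2) ^ 2) τ := by
    have := (((hasDerivAt_id τ).const_mul (π * I : ℂ)).mul_const (((n : ℂ) + 1 / 2) ^ 2)).add_const
      (2 * π * I * z * ((n : ℂ) + 1 / 2))
    simpa using this
  refine (h.cexp.const_mul ((-1 : ℂ) ^ n * ((n : ℂ) + 1 / 2) ^ k)).congr_deriv ?_
  rw [thTerm]; ring

lemma th_hasDerivAt_z (k : ℕ) {τ : ℂ} (hτ : 0 < τ.im) (z : ℂ) :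
    HasDerivAt (fun w => th k τ w) (2 * π * I * th (k + 1) τ z) z := by
  rw [th, ← tsum_mul_left]
  refine hasDerivAt_tsum_of_isPreconnected (t := Metric.ball z 1)
    ((summable_thBound (k + 1) (|z.im| + 1) hτ).mul_left ‖(2 * π * I : ℂ)‖) Metric.isOpen_ball
    (convex_ball z 1).isPreconnected (fun n w _ => thTerm_hasDerivAt_z k τ w n) (fun n w hw => ?_)
    (Metric.mem_ball_self one_pos) (summable_thTerm k hτ z) (Metric.mem_ball_self one_pos)
  rw [norm_mul]
  gcongr
  refine thTerm_norm_le _ hτ ?_ le_rfl n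
  have h1 : |(w - z).im| ≤ 1 :=
    (Complex.abs_im_le_norm _).trans (by simpa [dist_eq_norm] using (Metric.mem_ball.mp hw).le)
  have : w.im = (w - z).im + z.im := by simp
  rw [this]
  linarith [abs_add_le (w - z).im z.im]

/-- The heat equation for `ϑ` and all its `z`-derivatives. -/
lemma th_hasDerivAt_tau (k : ℕ) {τ : ℂ} (hτ : 0 < τ.im) (z : ℂ) :
    HasDerivAt (fun t => th k t z) (π * I * th (k + 2) τ z) τ := by
  rw [th, ← tsum_mul_left]
  have hT : 0 < τ.im / 2 := by positivity
  refine hasDerivAt_tsum_of_isPreconnected (t := Metric.ball τ (τ.im / 2))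
    ((summable_thBound (k + 2) |z.im| hT).mul_left ‖(π * I : ℂ)‖) Metric.isOpen_ball
    (convex_ball τ _).isPreconnected (fun n w _ => thTerm_hasDerivAt_tau k w z n) (fun n w hw => ?_)
    (Metric.mem_ball_self hT) (summable_thTerm k hτ z) (Metric.mem_ball_self hT)
  rw [norm_mul]
  gcongr
  refine thTerm_norm_le _ hT le_rfl ?_ n
  have h1 : |(w - τ).im| ≤ τ.im / 2 :=
    (Complex.abs_im_le_norm _).trans (by simpa [dist_eq_norm] using (Metric.mem_ball.mp hw).le)
  have h2 : w.im = (w - τ).im + τ.im := by simp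
  linarith [(abs_le.mp h1).1]

lemma thetaJ_eq_th (τ z : ℂ) : thetaJ τ z = th 0 τ z := by
  rw [thetaJ, th, ← tsum_mul_left]
  refine tsum_congr fun n => ?_
  have : (π * I * τ * ((n : ℂ) + 1 / 2) ^ 2 + 2 * π * I * z * ((n : ℂ) + 1 / 2)) =
    π * I * τ / 4 + π * I * z + π * I * τ * n * (n + 1) + 2 * π * I * z * n := by ring
  rw [thTerm, this, Complex.exp_add, Complex.exp_add, Complex.exp_add]
  ring

/-- The parity `∂^k ϑ(-z) = -(-1)^k ∂^k ϑ(z)`. -/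
lemma th_neg (k : ℕ) (τ z : ℂ) : th k τ (-z) = -(-1) ^ k * th k τ z := by
  rw [th, th, ← tsum_mul_left, ← (Equiv.subLeft (-1 : ℤ)).tsum_eq]
  refine tsum_congr fun n => ?_
  simp only [thTerm, Equiv.subLeft_apply]
  have h1 : (((-1 - n : ℤ) : ℂ) + 1 / 2) = -1 * ((n : ℂ) + 1 / 2) := by push_cast; ring
  have h2 : (-1 : ℂ) ^ (-1 - n : ℤ) = -(-1) ^ n := by
    rw [zpow_sub₀ (by norm_num), zpow_neg_one]
    rcases Int.even_or_odd n with h | h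
    · rw [h.neg_one_zpow]; norm_num
    · rw [h.neg_one_zpow]; norm_num
  rw [h1, h2, mul_pow]
  have h3 : π * I * τ * (-1 * ((n : ℂ) + 1 / 2)) ^ 2 + 2 * π * I * -z * (-1 * ((n : ℂ) + 1 / 2))
    = π * I * τ * ((n : ℂ) + 1 / 2) ^ 2 + 2 * π * I * z * ((n : ℂ) + 1 / 2) := by ring
  rw [h3]; ring

lemma th_even_zero {k : ℕ} (hk : Even k) (τ : ℂ) : th k τ 0 = 0 := by
  have := th_neg k τ 0
  rw [neg_zero, hk.neg_one_pow] at this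
  linear_combination this / 2

/-! ### Addition theorem and three-term relation -/

/-- Addition theorem: `ϑ(x+y)ϑ(x-y)` is a `2 × 2` determinant in index-one theta functions.
With `m = i + j`, `n = i - j` or `n = i - j - 1` the exponents `(m+½)² + (n+½)²` decouple. -/
lemma th_addition {τ : ℂ} (hτ : 0 < τ.im) : ∃ A B : ℂ → ℂ, ∀ x y : ℂ,
    th 0 τ (x + y) * th 0 τ (x - y) = B x * A y - A x * B y := by
  have h2τ : 0 < (2 * τ).im := by simpa using hτ
  let a : ℂ → ℤ → ℂ := fun x n => jacobiTheta₂_term n (2 * x) (2 * τ)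
  let b : ℂ → ℤ → ℂ := fun x n => (-1) ^ n * thTerm 0 (2 * τ) (2 * x) n
  have ha : ∀ x, Summable fun n => ‖a x n‖ := fun x =>
    ((summable_jacobiTheta₂_term_iff _ _).mpr h2τ).norm
  have hb : ∀ x, Summable fun n => ‖b x n‖ := fun x => by
    refine (summable_thTerm 0 h2τ (2 * x)).norm.congr fun n => ?_
    simp [b]
  refine ⟨fun x => ∑' n, a x n, fun x => ∑' n, b x n, fun x y => ?_⟩
  have hprod : ∀ f g : ℤ → ℂ, (Summable fun n => ‖f n‖) → (Summable fun n => ‖g n‖) →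
      HasSum (fun p : ℤ × ℤ => f p.1 * g p.2) ((∑' n, f n) * ∑' n, g n) := fun f g hf hg => by
    rw [tsum_mul_tsum_of_summable_norm hf hg]
    exact (summable_mul_of_summable_norm hf hg).hasSum
  have H := hprod _ _ (summable_thTerm 0 hτ (x + y)).norm (summable_thTerm 0 hτ (x - y)).norm
  have H1 := hprod _ _ (hb x) (ha y)
  have H2 := (hprod _ _ (ha x) (hb y)).neg
  let e : (ℤ × ℤ) ⊕ (ℤ × ℤ) → ℤ × ℤ :=
    Sum.elim (fun p => (p.1 + p.2, p.1 - p.2)) (fun p => (p.1 + p.2, p.1 - p.2 - 1))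
  have he : Function.Bijective e := by
    constructor
    · rintro (⟨p, q⟩ | ⟨p, q⟩) (⟨r, s⟩ | ⟨r, s⟩) h <;>
        simp only [e, Sum.elim_inl, Sum.elim_inr, Prod.mk.injEq] at h <;>
        obtain ⟨h1, h2⟩ := h
      · have : p = r ∧ q = s := by omega
        rw [this.1, this.2]
      · omega
      · omega
      · have : p = r ∧ q = s := by omega
        rw [this.1, this.2]
    · rintro ⟨m, n⟩
      rcases Int.even_or_odd' (m + n) with ⟨k, hk | hk⟩
      · exact ⟨Sum.inl (k, m - k), by simp only [e, Sum.elim_inl, Prod.mk.injEq]; omega⟩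
      · exact ⟨Sum.inr (k + 1, m - k - 1), by simp only [e, Sum.elim_inr, Prod.mk.injEq]; omega⟩
  have hsq : ∀ n : ℤ, ((-1 : ℂ) ^ n) * (-1) ^ n = 1 := fun n => by
    rw [← mul_zpow]; simp
  have H' := (Equiv.ofBijective e he).hasSum_iff.mpr H
  refine H'.unique ?_
  rw [sub_eq_add_neg (_ * _) (_ * _)]
  refine HasSum.sum (M := ℂ) ?_ ?_
  · refine H1.congr_fun ?_
    rintro ⟨i, j⟩
    simp only [Function.comp_apply, Equiv.ofBijective_apply, e, Sum.elim_inl, a, b, thTerm,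
      jacobiTheta₂_term, pow_zero, mul_one]
    rw [← mul_assoc ((-1 : ℂ) ^ i) ((-1 : ℂ) ^ i), hsq, one_mul, mul_mul_mul_comm, ← zpow_add₀ (by norm_num),
      show i + j + (i - j) = i + i by ring, zpow_add₀ (by norm_num), hsq, one_mul,
      ← Complex.exp_add, ← Complex.exp_add]
    congr 1
    push_cast
    ring
  · refine H2.congr_fun ?_
    rintro ⟨i, j⟩
    simp only [Function.comp_apply, Equiv.ofBijective_apply, e, Sum.elim_inr, a, b, thTerm,
      jacobiTheta₂_term, pow_zero, mul_one]
    rw [← mul_assoc ((-1 : ℂ) ^ j) ((-1 : ℂ) ^ j), hsq, one_mul, mul_mul_mul_comm, ← zpow_add₀ (by norm_num),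
      show i + j + (i - j - 1) = i + i + (-1) by ring, zpow_add₀ (by norm_num),
      zpow_add₀ (by norm_num), hsq, one_mul,
      ← Complex.exp_add, ← Complex.exp_add, zpow_neg_one, inv_neg_one, neg_one_mul]
    congr 2
    push_cast
    ring

/-- Weierstrass' three-term relation. -/
lemma th_three_term {τ : ℂ} (hτ : 0 < τ.im) (x y u v : ℂ) :
    (th 0 τ (x + y) * th 0 τ (x - y)) * (th 0 τ (u + v) * th 0 τ (u - v)) =
      (th 0 τ (x + u) * th 0 τ (x - u)) * (th 0 τ (y + v) * th 0 τ (y - v)) -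
      (th 0 τ (x + v) * th 0 τ (x - v)) * (th 0 τ (y + u) * th 0 τ (y - u)) := by
  obtain ⟨A, B, h⟩ := th_addition hτ
  simp only [h]
  ring

/-! ### Odd theta functions and bilinear relations -/

/-- A sequence of entire functions each of which is the derivative of the previous one. -/
def IsTower (f : ℕ → ℂ → ℂ) : Prop := ∀ k x, HasDerivAt (f k) (f (k + 1) x) x

/-- The tower of derivatives of a product, given by Leibniz' rule. -/
def mulT (f g : ℕ → ℂ → ℂ) (n : ℕ) (x : ℂ) : ℂ :=
  ∑ p ∈ Finset.HasAntidiagonal.antidiagonal n, (n.choose p.1 : ℂ) * (f p.1 x * g p.2 x)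

lemma IsTower.mul {f g : ℕ → ℂ → ℂ} (hf : IsTower f) (hg : IsTower g) : IsTower (mulT f g) := by
  intro n x
  have h : HasDerivAt (mulT f g n) (∑ p ∈ Finset.HasAntidiagonal.antidiagonal n, (n.choose p.1 : ℂ) *
      (f (p.1 + 1) x * g p.2 x + f p.1 x * g (p.2 + 1) x)) x := by
    refine HasDerivAt.fun_sum fun p _ => ?_
    exact ((hf p.1 x).mul (hg p.2 x)).const_mul _
  refine h.congr_deriv ?_
  rw [mulT, Finset.sum_antidiagonal_choose_succ_mul (fun i j => f i x * g j x) n,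
    ← Finset.sum_add_distrib]
  refine Finset.sum_congr rfl fun p hp => ?_
  rw [Nat.choose_symm_of_eq_add (Finset.HasAntidiagonal.mem_antidiagonal.mp hp).symm]
  ring

lemma IsTower.sub {f g : ℕ → ℂ → ℂ} (hf : IsTower f) (hg : IsTower g) :
    IsTower fun k x => f k x - g k x := fun k x => (hf k x).sub (hg k x)

lemma IsTower.const_mul {f : ℕ → ℂ → ℂ} (hf : IsTower f) (c : ℂ) :
    IsTower fun k x => c * f k x := fun k x => (hf k x).const_mul c

lemma IsTower.shift {f : ℕ → ℂ → ℂ} (hf : IsTower f) (m : ℕ) :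
    IsTower fun k x => f (k + m) x := fun k x => by
  have := hf (k + m) x
  rwa [show k + m + 1 = k + 1 + m by ring] at this

lemma IsTower.comp_affine {f : ℕ → ℂ → ℂ} (hf : IsTower f) (a b : ℂ) :
    IsTower fun k x => b ^ k * f k (a + b * x) := fun k x => by
  have h1 : HasDerivAt (fun x => a + b * x) b x := by
    simpa using ((hasDerivAt_id x).const_mul b).const_add a
  have := ((hf k (a + b * x)).comp x h1).const_mul (b ^ k)
  refine this.congr_deriv ?_
  ring

lemma IsTower.ext {f g : ℕ → ℂ → ℂ} (hf : IsTower f) (hg : IsTower g)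
    (h : ∀ x, f 0 x = g 0 x) (k : ℕ) : ∀ x, f k x = g k x := by
  induction k with
  | zero => exact h
  | succ k ih =>
    intro x
    have : f k = g k := funext ih
    exact (this ▸ hf k x).unique (hg k x)

/-- The tower `s` behaves like an odd theta function: it is odd and satisfies the
three-term relation. -/
structure OddTheta (s : ℕ → ℂ → ℂ) : Prop where
  tower : IsTower s
  neg : ∀ k x, s k (-x) = -(-1) ^ k * s k x
  three : ∀ x y u v, (s 0 (x + y) * s 0 (x - y)) * (s 0 (u + v) * s 0 (u - v)) =
      (s 0 (x + u) * s 0 (x - u)) * (s 0 (y + v) * s 0 (y - v)) -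
      (s 0 (x + v) * s 0 (x - v)) * (s 0 (y + u) * s 0 (y - u))

/-- The tower of derivatives of `U = s s'' - s'²`. -/
def UT (s : ℕ → ℂ → ℂ) (n : ℕ) (x : ℂ) : ℂ :=
  mulT s (fun k => s (k + 2)) n x - mulT (fun k => s (k + 1)) (fun k => s (k + 1)) n x

lemma IsTower.UT {s : ℕ → ℂ → ℂ} (h : IsTower s) : IsTower (UT s) :=
  (h.mul (h.shift 2)).sub ((h.shift 1).mul (h.shift 1))

lemma UT_zero (s : ℕ → ℂ → ℂ) (x : ℂ) : UT s 0 x = s 0 x * s 2 x - s 1 x ^ 2 := by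
  simp [UT, mulT]; ring

lemma UT_one (s : ℕ → ℂ → ℂ) (x : ℂ) : UT s 1 x = s 0 x * s 3 x - s 1 x * s 2 x := by
  simp [UT, mulT, Finset.Nat.antidiagonal_succ]; ring

lemma mulT_zero (f g : ℕ → ℂ → ℂ) (x : ℂ) : mulT f g 0 x = f 0 x * g 0 x := by
  simp [mulT]

lemma mulT_one (f g : ℕ → ℂ → ℂ) (x : ℂ) :
    mulT f g 1 x = f 0 x * g 1 x + f 1 x * g 0 x := by
  simp [mulT, Finset.Nat.antidiagonal_succ]

lemma mulT_two (f g : ℕ → ℂ → ℂ) (x : ℂ) :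
    mulT f g 2 x = f 0 x * g 2 x + 2 * (f 1 x * g 1 x) + f 2 x * g 0 x := by
  simp [mulT, Finset.Nat.antidiagonal_succ]; ring

lemma mulT_four (f g : ℕ → ℂ → ℂ) (x : ℂ) :
    mulT f g 4 x = f 0 x * g 4 x + 4 * (f 1 x * g 3 x) + 6 * (f 2 x * g 2 x)
      + 4 * (f 3 x * g 1 x) + f 4 x * g 0 x := by
  simp [mulT, Finset.Nat.antidiagonal_succ, Nat.choose]; ring

lemma mulT_six (f g : ℕ → ℂ → ℂ) (x : ℂ) :
    mulT f g 6 x = f 0 x * g 6 x + 6 * (f 1 x * g 5 x) + 15 * (f 2 x * g 4 x)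
      + 20 * (f 3 x * g 3 x) + 15 * (f 4 x * g 2 x) + 6 * (f 5 x * g 1 x) + f 6 x * g 0 x := by
  simp [mulT, Finset.Nat.antidiagonal_succ, Nat.choose]; ring

namespace OddTheta

lemma zero_of_even {s : ℕ → ℂ → ℂ} (h : OddTheta s) {k : ℕ} (hk : Even k) : s k 0 = 0 := by
  have := h.neg k 0
  rw [neg_zero, hk.neg_one_pow] at this
  linear_combination this / 2

/-- The case `u = 0` of the three-term relation, at second order in `v`. -/
lemma star {s : ℕ → ℂ → ℂ} (h : OddTheta s) (x y : ℂ) :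
    s 1 0 ^ 2 * (s 0 (x + y) * s 0 (x - y)) =
      UT s 0 x * s 0 y ^ 2 - s 0 x ^ 2 * UT s 0 y := by
  have h0 := h.zero_of_even (k := 0) (by decide)
  have h2 := h.zero_of_even (k := 2) (by decide)
  have hV : ∀ a, IsTower (mulT (fun k v => 1 ^ k * s k (a + 1 * v))
      (fun k v => (-1) ^ k * s k (a + -1 * v))) := fun a =>
    (h.tower.comp_affine a 1).mul (h.tower.comp_affine a (-1))
  have key := ((hV 0).const_mul (s 0 (x + y) * s 0 (x - y))).ext
    (((hV y).const_mul (s 0 x ^ 2)).sub ((hV x).const_mul (s 0 y ^ 2))) (fun v => by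
      have := h.three x y 0 v
      simp only [mulT_zero, pow_zero, one_mul, neg_one_mul, ← sub_eq_add_neg]
      simp only [add_zero, sub_zero] at this
      linear_combination this) 2 0
  simp only [mulT_two, mul_zero, add_zero, h0, h2] at key
  rw [UT_zero, UT_zero]
  linear_combination (-1 / 2) * key

/-- The duplication formula: `star` at first order along the diagonal `x = y`. -/
lemma duplication {s : ℕ → ℂ → ℂ} (h : OddTheta s) (z : ℂ) :
    s 1 0 ^ 3 * s 0 (2 * z) = s 0 z * (s 0 z * UT s 1 z - 2 * s 1 z * UT s 0 z) := by
  have h0 := h.zero_of_even (k := 0) (by decide)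
  have t1 := fun b => h.tower.comp_affine z b
  have t2 := fun b => h.tower.UT.comp_affine z b
  have key := ((h.tower.comp_affine 0 2).const_mul (s 1 0 ^ 2 * s 0 (2 * z))).ext
    (((t2 1).mul ((t1 (-1)).mul (t1 (-1)))).sub (((t1 1).mul (t1 1)).mul (t2 (-1)))) (fun v => by
      have := h.star (z + v) (z - v)
      simp only [mulT_zero, pow_zero, one_mul, neg_one_mul, ← sub_eq_add_neg, zero_add]
      rw [show z + v + (z - v) = 2 * z by ring, show z + v - (z - v) = 2 * v by ring] at this
      linear_combination this) 1 0
  simp only [mulT_one, mulT_zero, mul_zero, add_zero] at key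
  linear_combination (1 / 2) * key

/-- The fourth `y`-derivative of `star` at `y = 0`: a bilinear differential equation for `s`. -/
lemma order_four {s : ℕ → ℂ → ℂ} (h : OddTheta s) (x : ℂ) :
    s 1 0 ^ 2 * (s 0 x * s 4 x - 4 * s 1 x * s 3 x + 3 * s 2 x ^ 2) =
      4 * s 1 0 * s 3 0 * UT s 0 x - (s 1 0 * s 5 0 - s 3 0 ^ 2) * s 0 x ^ 2 := by
  have h0 := h.zero_of_even (k := 0) (by decide)
  have h2 := h.zero_of_even (k := 2) (by decide)
  have h4 := h.zero_of_even (k := 4) (by decide)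
  have h6 := h.zero_of_even (k := 6) (by decide)
  have key := (((h.tower.comp_affine x 1).mul (h.tower.comp_affine x (-1))).const_mul
    (s 1 0 ^ 2)).ext (((h.tower.mul h.tower).const_mul (UT s 0 x)).sub
      (h.tower.UT.const_mul (s 0 x ^ 2))) (fun v => by
      have := h.star x v
      simp only [mulT_zero, pow_zero, one_mul, neg_one_mul, ← sub_eq_add_neg]
      linear_combination this) 4 0
  simp only [UT, mulT_four, mulT_zero, mul_zero, add_zero, h0, h2, h4, h6, Nat.reduceAdd] at key
  rw [UT_zero]
  linear_combination (1 / 2) * key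

/-- The sixth `y`-derivative of `star` at `y = 0`. -/
lemma order_six {s : ℕ → ℂ → ℂ} (h : OddTheta s) (x : ℂ) :
    s 1 0 ^ 2 * (s 0 x * s 6 x - 6 * s 1 x * s 5 x + 15 * s 2 x * s 4 x - 10 * s 3 x ^ 2) =
      (6 * s 1 0 * s 5 0 + 10 * s 3 0 ^ 2) * UT s 0 x
        - (2 * s 1 0 * s 7 0 - 2 * s 3 0 * s 5 0) * s 0 x ^ 2 := by
  have h0 := h.zero_of_even (k := 0) (by decide)
  have h2 := h.zero_of_even (k := 2) (by decide)
  have h4 := h.zero_of_even (k := 4) (by decide)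
  have h6 := h.zero_of_even (k := 6) (by decide)
  have h8 := h.zero_of_even (k := 8) (by decide)
  have key := (((h.tower.comp_affine x 1).mul (h.tower.comp_affine x (-1))).const_mul
    (s 1 0 ^ 2)).ext (((h.tower.mul h.tower).const_mul (UT s 0 x)).sub
      (h.tower.UT.const_mul (s 0 x ^ 2))) (fun v => by
      have := h.star x v
      simp only [mulT_zero, pow_zero, one_mul, neg_one_mul, ← sub_eq_add_neg]
      linear_combination this) 6 0
  simp only [UT, mulT_six, mulT_zero, mul_zero, add_zero, h0, h2, h4, h6, h8, Nat.reduceAdd] at key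
  rw [UT_zero]
  linear_combination (1 / 2) * key

end OddTheta

/-! ### The Weierstrass function of an odd theta function -/

namespace OddTheta

/-- A nonzero odd theta function has a simple zero at the origin: otherwise `star` makes its
logarithmic derivative affine, so that the function is an exponential, which never vanishes. -/
lemma deriv_zero_ne {s : ℕ → ℂ → ℂ} (h : OddTheta s) {z : ℂ} (hz : s 0 z ≠ 0) : s 1 0 ≠ 0 := by
  intro h1
  have h0 := h.zero_of_even (k := 0) (by decide)
  set κ : ℂ := UT s 0 z / s 0 z ^ 2 with hκ
  have hU : ∀ x, UT s 0 x = κ * s 0 x ^ 2 := fun x => by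
    have := h.star x z
    rw [h1] at this
    rw [hκ]
    field_simp
    linear_combination -this
  set b : ℂ := s 1 z / s 0 z - κ * z with hb
  -- By `hU`, the logarithmic derivative of `s` has constant derivative `κ` near `z`.
  have hev : ∀ᶠ x in nhds z, s 0 x ≠ 0 := (h.tower 0 z).continuousAt.eventually_ne hz
  have hloc : ∀ᶠ x in nhds z, s 1 x - (κ * x + b) * s 0 x = 0 := by
    obtain ⟨r, hr, hball⟩ := Metric.eventually_nhds_iff_ball.mp hev
    filter_upwards [Metric.ball_mem_nhds z hr] with x hx
    have hconst : ∀ y ∈ Metric.ball z r,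
        HasDerivAt (fun y => s 1 y / s 0 y - κ * y) 0 y := fun y hy => by
      have hd := ((h.tower 1 y).div (h.tower 0 y) (hball y hy)).sub
        ((hasDerivAt_id y).const_mul κ)
      refine hd.congr_deriv ?_
      have := hU y
      rw [UT_zero] at this
      have hy0 := hball y hy
      simp only [Nat.reduceAdd, zero_add]
      field_simp
      linear_combination this
    have := (convex_ball z r).is_const_of_fderivWithin_eq_zero (𝕜 := ℂ)
      (f := fun y => s 1 y / s 0 y - κ * y)
      (fun y hy => (hconst y hy).differentiableAt.differentiableWithinAt)
      (fun y hy => by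
        rw [fderivWithin_of_isOpen Metric.isOpen_ball hy]
        have := (hconst y hy).hasFDerivAt.fderiv
        simpa using this) hx (Metric.mem_ball_self hr)
    have hx0 := hball x hx
    have e : s 1 x / s 0 x = κ * x + b := by rw [hb]; linear_combination this
    rw [div_eq_iff hx0] at e
    linear_combination e
  have hdiff : ∀ k, Differentiable ℂ (s k) := fun k x => (h.tower k x).differentiableAt
  have hglob : ∀ x, s 1 x - (κ * x + b) * s 0 x = 0 := by
    have han : AnalyticOnNhd ℂ (fun x => s 1 x - (κ * x + b) * s 0 x) Set.univ := by
      refine DifferentiableOn.analyticOnNhd (Differentiable.differentiableOn ?_) isOpen_univ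
      have := hdiff 0
      have := hdiff 1
      fun_prop
    intro x
    have := han.eqOn_zero_of_preconnected_of_eventuallyEq_zero isPreconnected_univ
      (Set.mem_univ z) hloc
    exact this (Set.mem_univ x)
  have hd : ∀ x, HasDerivAt (fun x => s 0 x * cexp (-(κ * x ^ 2 / 2 + b * x))) 0 x := fun x => by
    have h2 : HasDerivAt (fun x : ℂ => -(κ * x ^ 2 / 2 + b * x)) (-(κ * x + b)) x := by
      have := ((((hasDerivAt_pow 2 x).const_mul κ).div_const 2).add
        ((hasDerivAt_id x).const_mul b)).neg
      refine this.congr_deriv ?_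
      push_cast; ring
    refine ((h.tower 0 x).mul h2.cexp).congr_deriv ?_
    have := hglob x
    simp only [zero_add]
    linear_combination cexp (-(κ * x ^ 2 / 2 + b * x)) * this
  have := is_const_of_deriv_eq_zero (fun x => (hd x).differentiableAt) (fun x => (hd x).deriv) z 0
  simp only [h0, zero_mul, mul_eq_zero, Complex.exp_ne_zero, or_false] at this
  exact hz this

end OddTheta

/-- The weight 2 coefficient of the Taylor expansion at `0`; it is `E₂` for `ϑ`. -/
def wE2 (s : ℕ → ℂ → ℂ) : ℂ := 4 * (s 3 0 / s 1 0)

/-- The weight 4 coefficient of the Taylor expansion at `0`; it is `E₄` for `ϑ`. -/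
def wE4 (s : ℕ → ℂ → ℂ) : ℂ := 40 * (s 3 0 / s 1 0) ^ 2 - 24 * (s 5 0 / s 1 0)

/-- The weight 6 coefficient of the Taylor expansion at `0`; it is `E₆` for `ϑ`. -/
def wE6 (s : ℕ → ℂ → ℂ) : ℂ :=
  280 * (s 3 0 / s 1 0) ^ 3 - 252 * (s 3 0 / s 1 0) * (s 5 0 / s 1 0) + 36 * (s 7 0 / s 1 0)

/-- The Weierstrass function `℘ = E₂/12 - (log s)''`. -/
def wP (s : ℕ → ℂ → ℂ) (x : ℂ) : ℂ := wE2 s / 12 - UT s 0 x / s 0 x ^ 2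

/-- The derivative of `wP`. -/
def wQ (s : ℕ → ℂ → ℂ) (x : ℂ) : ℂ :=
  -(s 0 x * UT s 1 x - 2 * s 1 x * UT s 0 x) / s 0 x ^ 3

lemma wP_hasDerivAt {s : ℕ → ℂ → ℂ} (h : IsTower s) {x : ℂ} (hx : s 0 x ≠ 0) :
    HasDerivAt (wP s) (wQ s x) x := by
  have := (((h.UT 0 x).div ((h 0 x).pow 2) (pow_ne_zero 2 hx))).const_sub (wE2 s / 12)
  refine this.congr_deriv ?_
  rw [wQ]
  simp only [zero_add, Pi.pow_apply]
  field_simp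
  ring

namespace OddTheta

/-- `order_four` divided by `s'(0)²`. -/
lemma R4 {s : ℕ → ℂ → ℂ} (h : OddTheta s) (h1 : s 1 0 ≠ 0) (x : ℂ) :
    s 0 x * s 4 x - 4 * s 1 x * s 3 x + 3 * s 2 x ^ 2 - 4 * (s 3 0 / s 1 0) * UT s 0 x
      + (s 5 0 / s 1 0 - (s 3 0 / s 1 0) ^ 2) * s 0 x ^ 2 = 0 := by
  have := h.order_four x
  field_simp
  linear_combination this

/-- `order_six` divided by `s'(0)²`. -/
lemma R6 {s : ℕ → ℂ → ℂ} (h : OddTheta s) (h1 : s 1 0 ≠ 0) (x : ℂ) :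
    s 0 x * s 6 x - 6 * s 1 x * s 5 x + 15 * s 2 x * s 4 x - 10 * s 3 x ^ 2
      - (6 * (s 5 0 / s 1 0) + 10 * (s 3 0 / s 1 0) ^ 2) * UT s 0 x
      + (2 * (s 7 0 / s 1 0) - 2 * (s 3 0 / s 1 0) * (s 5 0 / s 1 0)) * s 0 x ^ 2 = 0 := by
  have := h.order_six x
  field_simp
  linear_combination this

/-- The first and second derivatives of `R4`. -/
lemma R4_deriv {s : ℕ → ℂ → ℂ} (h : OddTheta s) (h1 : s 1 0 ≠ 0) (x : ℂ) :
    s 0 x * s 5 x - 3 * s 1 x * s 4 x + 2 * s 2 x * s 3 x - 4 * (s 3 0 / s 1 0) * UT s 1 x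
      + (s 5 0 / s 1 0 - (s 3 0 / s 1 0) ^ 2) * (2 * s 0 x * s 1 x) = 0 ∧
    s 0 x * s 6 x - 2 * s 1 x * s 5 x - s 2 x * s 4 x + 2 * s 3 x ^ 2
      - 4 * (s 3 0 / s 1 0) * (s 0 x * s 4 x - s 2 x ^ 2)
      + (s 5 0 / s 1 0 - (s 3 0 / s 1 0) ^ 2) * (2 * s 0 x * s 2 x + 2 * s 1 x ^ 2) = 0 := by
  set a := s 3 0 / s 1 0
  set c := s 5 0 / s 1 0 - a ^ 2
  have ht := h.tower
  have key := (((ht.mul (ht.shift 4)).sub (((ht.shift 1).mul (ht.shift 3)).const_mul 4)).sub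
    (((ht.shift 2).mul (ht.shift 2)).const_mul (-3))).ext
    ((ht.UT.const_mul (4 * a)).sub ((ht.mul ht).const_mul c)) (fun x => by
      have := h.R4 h1 x
      simp only [mulT_zero, zero_add]
      linear_combination this)
  constructor
  · have := key 1 x
    simp only [mulT_one, zero_add, Nat.reduceAdd] at this
    linear_combination this
  · have := key 2 x
    simp only [UT, mulT_two, zero_add, Nat.reduceAdd] at this
    linear_combination this

/-- `℘'' = 6℘² - E₄/24`, which is `R4` written in terms of `℘`. -/
lemma wQ_hasDerivAt {s : ℕ → ℂ → ℂ} (h : OddTheta s) {x : ℂ} (hx : s 0 x ≠ 0) :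
    HasDerivAt (wQ s) (6 * wP s x ^ 2 - wE4 s / 24) x := by
  have h1 := h.deriv_zero_ne hx
  have := ((((h.tower 0 x).mul (h.tower.UT 1 x)).sub
    (((h.tower 1 x).const_mul 2).mul (h.tower.UT 0 x))).neg).div ((h.tower 0 x).pow 3)
      (pow_ne_zero 3 hx)
  refine this.congr_deriv ?_
  have hU2 : UT s 2 x = s 0 x * s 4 x - s 2 x ^ 2 := by
    simp only [UT, mulT_two]; ring
  have e := h.R4 h1 x
  rw [UT_zero] at e
  simp only [zero_add, Nat.reduceAdd, Pi.pow_apply, Pi.mul_apply, Pi.sub_apply, Pi.neg_apply,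
    UT_zero, UT_one, hU2, wP, wE2, wE4]
  generalize s 3 0 / s 1 0 = a at *
  generalize s 5 0 / s 1 0 = b at *
  field_simp
  linear_combination (-3456 * s 0 x ^ 4) * e

/-- The Weierstrass equation `℘'² = 4℘³ - E₄℘/12 + E₆/216`. -/
lemma wQ_sq {s : ℕ → ℂ → ℂ} (h : OddTheta s) {x : ℂ} (hx : s 0 x ≠ 0) :
    wQ s x ^ 2 = 4 * wP s x ^ 3 - wE4 s / 12 * wP s x + wE6 s / 216 := by
  have h1 := h.deriv_zero_ne hx
  have e4 := h.R4 h1 x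
  obtain ⟨e5, e6⟩ := h.R4_deriv h1 x
  have e := h.R6 h1 x
  rw [UT_zero] at e4 e
  rw [UT_one] at e5
  simp only [UT_zero, UT_one, wQ, wP, wE2, wE4, wE6]
  generalize s 3 0 / s 1 0 = a at *
  generalize s 5 0 / s 1 0 = b at *
  generalize s 7 0 / s 1 0 = d at *
  field_simp
  -- With `Lₖ` the `k`-th logarithmic derivative, the coefficients are those of
  -- `R6/s² - (R4/s²)'' - (18 L₂ + 4a) R4/s²`, in which `L₆` and `L₄` cancel.
  linear_combination (-31104) * (s 0 x ^ 4 * e - s 0 x ^ 4 * e6 + 4 * s 1 x * s 0 x ^ 3 * e5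
    - (6 * s 1 x ^ 2 * s 0 x ^ 2 - 2 * s 2 x * s 0 x ^ 3
      + 18 * (s 0 x * s 2 x - s 1 x ^ 2) * s 0 x ^ 2 + 4 * a * s 0 x ^ 4) * e4)

/-- `ϑ(3z)` as a polynomial in `℘`: the cleared denominator is the third division polynomial. -/
lemma triplication {s : ℕ → ℂ → ℂ} (h : OddTheta s) {x : ℂ} (hx : s 0 x ≠ 0) :
    s 0 (3 * x) / s 0 x = (s 0 x / s 1 0) ^ 8 * (3 * wP s x ^ 4 - wE4 s / 8 * wP s x ^ 2
      + wE6 s / 72 * wP s x - wE4 s ^ 2 / 2304) := by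
  have h1 := h.deriv_zero_ne hx
  have hev : ∀ᶠ y in nhds x, s 0 y ≠ 0 := (h.tower 0 x).continuousAt.eventually_ne hx
  have hd : ∀ k y, HasDerivAt (fun y => s k (2 * y)) (2 * s (k + 1) (2 * y)) y := fun k y => by
    have h1 : HasDerivAt (fun x : ℂ => 2 * x) 2 y := by
      simpa using (hasDerivAt_id y).const_mul (2 : ℂ)
    refine ((h.tower k (2 * y)).comp y h1).congr_deriv (mul_comm _ _)
  have g0 : ∀ y, s 0 y ≠ 0 → s 1 0 ^ 3 * s 0 (2 * y) = -(s 0 y ^ 4 * wQ s y) := fun y hy => by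
    rw [h.duplication y, wQ]
    field_simp
  have g1 : ∀ y, s 0 y ≠ 0 → s 1 0 ^ 3 * (2 * s 1 (2 * y)) =
      -(4 * s 0 y ^ 3 * s 1 y * wQ s y + s 0 y ^ 4 * (6 * wP s y ^ 2 - wE4 s / 24)) := by
    intro y hy
    have hev : ∀ᶠ y in nhds y, s 0 y ≠ 0 := (h.tower 0 y).continuousAt.eventually_ne hy
    refine ((hd 0 y).const_mul (s 1 0 ^ 3)).unique ?_
    refine HasDerivAt.congr_of_eventuallyEq ?_ (hev.mono g0)
    refine ((((h.tower 0 y).pow 4).mul (h.wQ_hasDerivAt hy)).neg).congr_deriv ?_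
    simp only [zero_add, Pi.pow_apply]
    push_cast
    ring
  have g2 : s 1 0 ^ 3 * (2 * (2 * s 2 (2 * x))) =
      -((12 * s 0 x ^ 2 * s 1 x ^ 2 + 4 * s 0 x ^ 3 * s 2 x) * wQ s x
        + 8 * s 0 x ^ 3 * s 1 x * (6 * wP s x ^ 2 - wE4 s / 24)
        + s 0 x ^ 4 * (12 * wP s x * wQ s x)) := by
    refine (((hd 1 x).const_mul 2).const_mul (s 1 0 ^ 3)).unique ?_
    refine HasDerivAt.congr_of_eventuallyEq ?_ (hev.mono g1)
    have hP := wP_hasDerivAt h.tower hx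
    have hQ := h.wQ_hasDerivAt hx
    have := (((((h.tower 0 x).pow 3).const_mul 4).mul (h.tower 1 x)).mul hQ).add
      (((h.tower 0 x).pow 4).mul (((hP.pow 2).const_mul 6).sub_const (wE4 s / 24)))
    refine this.neg.congr_deriv ?_
    simp only [zero_add, Nat.reduceAdd, Pi.pow_apply, Pi.mul_apply]
    push_cast
    ring
  have hQ := h.wQ_sq hx
  have hs := h.star (2 * x) x
  rw [show 2 * x + x = 3 * x by ring, show 2 * x - x = x by ring, UT_zero] at hs
  have hU : UT s 0 x = (wE2 s / 12 - wP s x) * s 0 x ^ 2 := by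
    rw [wP]; field_simp; ring
  have hs2 : s 0 x * s 2 x = (wE2 s / 12 - wP s x) * s 0 x ^ 2 + s 1 x ^ 2 := by
    rw [← hU, UT_zero]; ring
  have g0 := g0 x hx
  have g1 := g1 x hx
  rw [hU] at hs
  generalize wQ s x = Q at *
  generalize wP s x = P at *
  generalize wE4 s = e4 at *
  generalize wE6 s = e6 at *
  generalize wE2 s = e2 at *
  have key : s 1 0 ^ 8 * (s 0 (3 * x) * s 0 x) =
      s 0 x ^ 10 * (12 * P * Q ^ 2 - (6 * P ^ 2 - e4 / 24) ^ 2) / 4 := by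
    linear_combination s 1 0 ^ 6 * hs + s 0 x ^ 2 * (s 1 0 ^ 3 * s 2 (2 * x) * g0
        - s 0 x ^ 4 * Q * g2 / 4)
      - s 0 x ^ 2 / 4 * (s 1 0 ^ 3 * (2 * s 1 (2 * x))
        - (4 * s 0 x ^ 3 * s 1 x * Q + s 0 x ^ 4 * (6 * P ^ 2 - e4 / 24))) * g1
      - (e2 / 12 - P) * s 0 x ^ 2 * (s 1 0 ^ 3 * s 0 (2 * x) - s 0 x ^ 4 * Q) * g0
      + s 0 x ^ 8 * Q ^ 2 * hs2
  rw [hQ] at key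
  have e : s 0 (3 * x) = s 0 x ^ 9 * (3 * P ^ 4 - e4 / 8 * P ^ 2 + e6 / 72 * P - e4 ^ 2 / 2304)
      / s 1 0 ^ 8 := by
    rw [eq_div_iff (pow_ne_zero 8 h1)]
    refine mul_right_cancel₀ hx ?_
    linear_combination key
  rw [e]
  field_simp

end OddTheta

/-! ### The Jacobi theta function as an odd theta function -/

lemma two_pi_I_ne : (2 * π * I : ℂ) ≠ 0 := Complex.two_pi_I_ne_zero

/-- The tower of derivatives of `ϑ(τ, ·)` in the variable `x = 2πiz`. -/
def thT (τ : ℂ) (k : ℕ) (x : ℂ) : ℂ := th k τ (x / (2 * π * I))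

lemma thT_apply (τ : ℂ) (k : ℕ) (z : ℂ) : thT τ k (2 * π * I * z) = th k τ z := by
  rw [thT, mul_div_cancel_left₀ _ two_pi_I_ne]

lemma thT_zero (τ : ℂ) (k : ℕ) : thT τ k 0 = th k τ 0 := by rw [thT, zero_div]

lemma oddTheta_thT {τ : ℂ} (hτ : 0 < τ.im) : OddTheta (thT τ) where
  tower k x := by
    have h1 : HasDerivAt (fun x : ℂ => x / (2 * π * I)) (1 / (2 * π * I)) x :=
      (hasDerivAt_id x).div_const _
    refine ((th_hasDerivAt_z k hτ _).comp x h1).congr_deriv ?_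
    rw [thT]
    have := two_pi_I_ne
    field_simp
  neg k x := by rw [thT, neg_div, th_neg, thT]
  three x y u v := by
    simp only [thT, add_div, sub_div]
    exact th_three_term hτ _ _ _ _

/-- `ϑ(τ, ·)` does not vanish identically: its Fourier coefficients are nonzero. -/
lemma exists_th_ne_zero {τ : ℂ} (hτ : 0 < τ.im) : ∃ z, th 0 τ z ≠ 0 := by
  by_contra! hall
  let f : ℤ → ℝ → ℂ := fun n x => thTerm 0 τ x n * cexp (-(π * I * x))
  have hf : ∀ n x, f n x = (-1 : ℂ) ^ n * cexp (π * I * τ * ((n : ℂ) + 1 / 2) ^ 2)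
      * cexp ((2 * π * I * n) * x) := fun n x => by
    simp only [f, thTerm, pow_zero, mul_one]
    rw [mul_assoc, ← Complex.exp_add, mul_assoc ((-1 : ℂ) ^ n), ← Complex.exp_add]
    congr 2
    ring
  have hnorm : ∀ n x, ‖f n x‖ = ‖thTerm 0 τ 0 n‖ := fun n x => by
    rw [norm_mul, thTerm_norm, thTerm_norm, Complex.norm_exp]
    simp
  have hsum : ∀ x : ℝ, HasSum (fun n => f n x) 0 := fun x => by
    have := (summable_thTerm 0 hτ (x : ℂ)).hasSum.mul_right (cexp (-(π * I * x)))
    change HasSum _ (th 0 τ x * _) at this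
    rwa [hall, zero_mul] at this
  have key := intervalIntegral.hasSum_integral_of_dominated_convergence (μ := MeasureTheory.volume)
    (a := 0) (b := 1) (F := f) (f := fun _ => 0) (fun n _ => ‖thTerm 0 τ 0 n‖)
    (fun n => by
      refine Continuous.aestronglyMeasurable ?_
      simp only [funext (hf n)]
      fun_prop)
    (fun n => Filter.Eventually.of_forall fun x _ => (hnorm n x).le)
    (Filter.Eventually.of_forall fun x _ => (summable_thTerm 0 hτ 0).norm)
    (by simp) (Filter.Eventually.of_forall fun x _ => hsum x)
  have h0 : ∀ n : ℤ, n ≠ 0 → ∫ x in (0 : ℝ)..1, f n x = 0 := fun n hn => by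
    simp only [hf, intervalIntegral.integral_const_mul]
    have hn' : (2 * π * I * n : ℂ) ≠ 0 := mul_ne_zero two_pi_I_ne (by exact_mod_cast hn)
    rw [integral_exp_mul_complex hn']
    have : cexp (2 * π * I * n * ((1 : ℝ) : ℂ)) = 1 := by
      rw [Complex.exp_eq_one_iff]
      exact ⟨n, by push_cast; ring⟩
    rw [this]
    simp
  have h1 := key.unique (hasSum_single 0 h0)
  simp only [intervalIntegral.integral_zero, hf] at h1
  simp at h1
  exact (Complex.exp_ne_zero _ h1.symm).elim

lemma th_one_zero_ne {τ : ℂ} (hτ : 0 < τ.im) : th 1 τ 0 ≠ 0 := by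
  obtain ⟨z, hz⟩ := exists_th_ne_zero hτ
  have := (oddTheta_thT hτ).deriv_zero_ne (z := 2 * π * I * z) (by rwa [thT_apply])
  rwa [thT_zero] at this

/-! ### Modular transformations of the theta constants -/

/-- `E₂` expressed by theta constants. -/
def e2J (τ : ℂ) : ℂ := wE2 (thT τ)

/-- `E₄` expressed by theta constants. -/
def e4J (τ : ℂ) : ℂ := wE4 (thT τ)

/-- `E₆` expressed by theta constants. -/
def e6J (τ : ℂ) : ℂ := wE6 (thT τ)

lemma th_add_one (k : ℕ) (τ : ℂ) : th k (τ + 1) 0 = cexp (π * I / 4) * th k τ 0 := by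
  rw [th, th, ← tsum_mul_left]
  refine tsum_congr fun n => ?_
  simp only [thTerm, mul_zero, zero_mul, add_zero]
  have h1 : π * I * (τ + 1) * ((n : ℂ) + 1 / 2) ^ 2 =
      π * I * τ * ((n : ℂ) + 1 / 2) ^ 2 + π * I * (n * (n + 1) : ℤ) + π * I / 4 := by
    push_cast; ring
  have h2 : cexp (π * I * (n * (n + 1) : ℤ)) = 1 := by
    obtain ⟨m, hm⟩ := Int.even_mul_succ_self n
    rw [Complex.exp_eq_one_iff]
    exact ⟨m, by rw [hm]; push_cast; ring⟩
  rw [h1, Complex.exp_add, Complex.exp_add, h2]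
  ring

lemma eJ_add_one (τ : ℂ) :
    e2J (τ + 1) = e2J τ ∧ e4J (τ + 1) = e4J τ ∧ e6J (τ + 1) = e6J τ := by
  simp only [e2J, e4J, e6J, wE2, wE4, wE6, thT_zero, th_add_one,
    mul_div_mul_left _ _ (Complex.exp_ne_zero (π * I / 4)), and_self]

lemma th_eq_jacobiTheta₂ (τ z : ℂ) : th 0 τ z =
    cexp (π * I * τ / 4 + π * I * z) * jacobiTheta₂ (z + 1 / 2 + τ / 2) τ := by
  rw [th, jacobiTheta₂, ← tsum_mul_left]
  refine tsum_congr fun n => ?_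
  have h : ((-1 : ℂ) ^ n) = cexp (π * I * n) := by
    rw [← Complex.exp_pi_mul_I, ← Complex.exp_int_mul]
    congr 1; ring
  rw [thTerm, jacobiTheta₂_term, h, pow_zero, mul_one, ← Complex.exp_add, ← Complex.exp_add]
  congr 1
  ring

/-- The inversion formula for `ϑ`. -/
lemma th_inversion {τ : ℂ} (hτ : 0 < τ.im) : ∃ C : ℂ, C ≠ 0 ∧ ∀ z,
    th 0 (-1 / τ) (z / τ) = C * cexp (π * I * z ^ 2 / τ) * th 0 τ z := by
  have hτ0 : τ ≠ 0 := fun h => by simp [h] at hτ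
  have hr : (-I * τ) ^ (1 / 2 : ℂ) ≠ 0 := by
    rw [Ne, Complex.cpow_eq_zero_iff]
    simp [hτ0]
  refine ⟨(-I * τ) ^ (1 / 2 : ℂ) * cexp (-(π * I / 2)),
    mul_ne_zero hr (Complex.exp_ne_zero _), fun z => ?_⟩
  rw [th_eq_jacobiTheta₂, th_eq_jacobiTheta₂]
  have h1 : z / τ + 1 / 2 + -1 / τ / 2 = (z - 1 / 2 + τ / 2) / τ := by field_simp; ring
  have h2 : jacobiTheta₂ (z + 1 / 2 + τ / 2) τ = jacobiTheta₂ (z - 1 / 2 + τ / 2) τ := by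
    rw [← jacobiTheta₂_add_left (z - 1 / 2 + τ / 2) τ]
    congr 1; ring
  have h3 := jacobiTheta₂_functional_equation (z - 1 / 2 + τ / 2) τ
  have h4 : cexp (-π * I * (z - 1 / 2 + τ / 2) ^ 2 / τ) ≠ 0 := Complex.exp_ne_zero _
  rw [h1, h2, h3]
  have e : cexp (π * I * (-1 / τ) / 4 + π * I * (z / τ)) =
      cexp (-(π * I / 2)) * cexp (π * I * z ^ 2 / τ) * cexp (π * I * τ / 4 + π * I * z) *
        cexp (-π * I * (z - 1 / 2 + τ / 2) ^ 2 / τ) := by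
    rw [← Complex.exp_add, ← Complex.exp_add, ← Complex.exp_add]
    congr 1
    field_simp
    ring
  rw [e]
  field_simp

open Polynomial in
/-- `exp(σx²/2)` has `k`-th derivative `gaussPoly σ k (x) · exp(σx²/2)`. -/
def gaussPoly (σ : ℂ) : ℕ → ℂ[X]
  | 0 => 1
  | k + 1 => derivative (gaussPoly σ k) + C σ * X * gaussPoly σ k

lemma gauss_isTower (σ : ℂ) :
    IsTower fun k x => (gaussPoly σ k).eval x * cexp (σ * x ^ 2 / 2) := fun k x => by
  have h2 : HasDerivAt (fun x : ℂ => σ * x ^ 2 / 2) (σ * x) x := by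
    refine (((hasDerivAt_pow 2 x).const_mul σ).div_const 2).congr_deriv ?_
    push_cast; ring
  refine (((gaussPoly σ k).hasDerivAt x).mul h2.cexp).congr_deriv ?_
  simp only [gaussPoly, Polynomial.eval_add, Polynomial.eval_mul, Polynomial.eval_C,
    Polynomial.eval_X]
  ring

lemma gaussPoly_eval_zero (σ : ℂ) : (gaussPoly σ 0).eval 0 = 1 ∧ (gaussPoly σ 1).eval 0 = 0 ∧
    (gaussPoly σ 2).eval 0 = σ ∧ (gaussPoly σ 3).eval 0 = 0 ∧
    (gaussPoly σ 4).eval 0 = 3 * σ ^ 2 ∧ (gaussPoly σ 5).eval 0 = 0 ∧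
    (gaussPoly σ 6).eval 0 = 15 * σ ^ 3 ∧ (gaussPoly σ 7).eval 0 = 0 := by
  refine ⟨?_, ?_, ?_, ?_, ?_, ?_, ?_, ?_⟩ <;> simp [gaussPoly] <;> ring

/-- The Taylor coefficients at `0` of the inversion formula, up to order seven. -/
lemma th_inversion_coeff {τ : ℂ} (hτ : 0 < τ.im) : ∃ C : ℂ, C ≠ 0 ∧
    th 1 (-1 / τ) 0 = C * th 1 τ 0 ∧
    th 3 (-1 / τ) 0 = C * τ ^ 2 * (th 3 τ 0 + 3 * (1 / (2 * π * I * τ)) * th 1 τ 0) ∧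
    th 5 (-1 / τ) 0 = C * τ ^ 4 * (th 5 τ 0 + 10 * (1 / (2 * π * I * τ)) * th 3 τ 0
      + 15 * (1 / (2 * π * I * τ)) ^ 2 * th 1 τ 0) ∧
    th 7 (-1 / τ) 0 = C * τ ^ 6 * (th 7 τ 0 + 21 * (1 / (2 * π * I * τ)) * th 5 τ 0
      + 105 * (1 / (2 * π * I * τ)) ^ 2 * th 3 τ 0
      + 105 * (1 / (2 * π * I * τ)) ^ 3 * th 1 τ 0) := by
  have hτ0 : τ ≠ 0 := fun h => by simp [h] at hτ
  have hτ' : 0 < (-1 / τ).im := by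
    rw [div_eq_mul_inv, neg_one_mul, Complex.neg_im, Complex.inv_im, neg_div, neg_neg]
    exact div_pos hτ (Complex.normSq_pos.mpr hτ0)
  obtain ⟨C, hC, h⟩ := th_inversion hτ
  set σ : ℂ := 1 / (2 * π * I * τ) with hσ
  have key := ((oddTheta_thT hτ').tower.comp_affine 0 (1 / τ)).ext
    (((gauss_isTower σ).mul (oddTheta_thT hτ).tower).const_mul C) (fun x => by
      simp only [mulT_zero, gaussPoly, Polynomial.eval_one, one_mul, pow_zero, zero_add, thT]
      have := h (x / (2 * π * I))
      rw [show 1 / τ * x / (2 * π * I) = x / (2 * π * I) / τ by ring, this]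
      have e : π * I * (x / (2 * π * I)) ^ 2 / τ = σ * x ^ 2 / 2 := by
        rw [hσ]
        have := two_pi_I_ne
        have := Complex.I_ne_zero
        have : (π : ℂ) ≠ 0 := by exact_mod_cast Real.pi_ne_zero
        field_simp
      rw [e]; ring)
  obtain ⟨g0, g1, g2, g3, g4, g5, g6, g7⟩ := gaussPoly_eval_zero σ
  have z0 := th_even_zero (k := 0) (by decide) τ
  have z2 := th_even_zero (k := 2) (by decide) τ
  have z4 := th_even_zero (k := 4) (by decide) τ
  have z6 := th_even_zero (k := 6) (by decide) τ
  refine ⟨C * τ, mul_ne_zero hC hτ0, ?_, ?_, ?_, ?_⟩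
  · have k1 := key 1 0
    simp only [mul_zero, zero_add, thT_zero, mulT, Finset.Nat.antidiagonal_succ] at k1
    simp [g0, g1, z0] at k1
    field_simp at k1
    rw [neg_div]
    linear_combination k1
  · have k1 := key 3 0
    simp only [mul_zero, zero_add, thT_zero, mulT, Finset.Nat.antidiagonal_succ] at k1
    simp [g0, g1, g2, g3, z0, z2, Nat.choose] at k1
    field_simp at k1
    rw [neg_div]
    linear_combination k1
  · have k1 := key 5 0
    simp only [mul_zero, zero_add, thT_zero, mulT, Finset.Nat.antidiagonal_succ] at k1
    simp [g0, g1, g2, g3, g4, g5, z0, z2, z4, Nat.choose] at k1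
    field_simp at k1
    rw [neg_div]
    linear_combination k1
  · have k1 := key 7 0
    simp only [mul_zero, zero_add, thT_zero, mulT, Finset.Nat.antidiagonal_succ] at k1
    simp [g0, g1, g2, g3, g4, g5, g6, g7, z0, z2, z4, z6, Nat.choose] at k1
    field_simp at k1
    rw [neg_div]
    linear_combination k1

/-- The theta constants `e2J`, `e4J`, `e6J` transform under `τ ↦ -1/τ` like `E₂`, `E₄`, `E₆`. -/
lemma eJ_inversion {τ : ℂ} (hτ : 0 < τ.im) :
    e2J (-1 / τ) = τ ^ 2 * (e2J τ + 12 / (2 * π * I * τ)) ∧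
    e4J (-1 / τ) = τ ^ 4 * e4J τ ∧ e6J (-1 / τ) = τ ^ 6 * e6J τ := by
  obtain ⟨C, hC, h1, h3, h5, h7⟩ := th_inversion_coeff hτ
  have ht := th_one_zero_ne hτ
  simp only [e2J, e4J, e6J, wE2, wE4, wE6, thT_zero, h1, h3, h5, h7]
  rw [show (12 : ℂ) / (2 * π * I * τ) = 12 * (1 / (2 * π * I * τ)) by ring]
  generalize (1 / (2 * π * I * τ)) = σ
  refine ⟨?_, ?_, ?_⟩ <;> field_simp <;> ring

/-! ### Cusp forms of small weight and limits at the cusp -/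

open UpperHalfPlane ModularForm CuspForm ModularGroup Filter Topology Manifold in
/-- There is no nonzero cusp form of level one and weight less than `12`. -/
lemma levelOne_eq_zero {k : ℤ} (hk : k < 12) {f : ℍ → ℂ} (hd : MDiff f)
    (hS : f ∣[k] S = f) (hT : f ∣[k] T = f) (h0 : Tendsto f atImInfty (𝓝 0)) : f = 0 := by
  have hinv := SlashInvariantForm.slash_action_generators_SL2Z hS hT
  let F : CuspForm (Matrix.SpecialLinearGroup.mapGL ℝ : Matrix.SpecialLinearGroup (Fin 2) ℤ →* _).range k :=
    { toFun := f
      slash_action_eq' := fun A hA => by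
        obtain ⟨A, rfl⟩ := hA
        exact hinv A
      holo' := hd
      zero_at_cusps' := fun hc => by
        rw [Subgroup.IsArithmetic.isCusp_iff_isCusp_SL2Z] at hc
        rw [OnePoint.isZeroAt_iff_forall_SL2Z hc]
        intro γ _
        rw [hinv]
        exact h0 }
  have hF : F = 0 := rank_zero_iff_forall_zero.mp (CuspForm.rank_eq_zero_of_weight_lt_twelve hk) F
  have := congrArg (fun G : CuspForm _ k => (G : ℍ → ℂ)) hF
  exact this

open UpperHalfPlane ModularGroup in
lemma coe_S_smul (τ : ℍ) : ((S • τ : ℍ) : ℂ) = -1 / τ := by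
  rw [UpperHalfPlane.modular_S_smul]
  simp [neg_div, one_div, inv_neg]

open UpperHalfPlane ModularGroup in
lemma coe_T_smul (τ : ℍ) : ((T • τ : ℍ) : ℂ) = τ + 1 := by
  rw [UpperHalfPlane.modular_T_smul]
  simp [add_comm]

open UpperHalfPlane ModularForm ModularGroup in
lemma slash_S_eq {k : ℕ} {f : ℍ → ℂ} (τ : ℍ) :
    (f ∣[(k : ℤ)] S) τ = f (S • τ) / (τ : ℂ) ^ k := by
  rw [SL_slash_apply, denom_S, zpow_neg, zpow_natCast, div_eq_mul_inv]

open UpperHalfPlane ModularForm ModularGroup in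
lemma slash_T_eq {k : ℤ} {f : ℍ → ℂ} (τ : ℍ) : (f ∣[k] T) τ = f (T • τ) := by
  rw [SL_slash_apply, ModularGroup.denom_apply]
  simp [T]

open UpperHalfPlane hiding I in
open scoped UpperHalfPlane in
open Filter Topology in
/-- The leading term of the theta constants at the cusp. -/
lemma tendsto_th (k : ℕ) (hk : Odd k) :
    Tendsto (fun τ : ℍ => cexp (-(π * I * τ / 4)) * th k τ 0) atImInfty
      (𝓝 (2 * (1 / 2 : ℂ) ^ k)) := by
  let g : ℤ → ℂ := fun n => if n = 0 ∨ n = -1 then (1 / 2 : ℂ) ^ k else 0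
  have hform : ∀ (τ : ℂ) (n : ℤ), cexp (-(π * I * τ / 4)) * thTerm k τ 0 n =
      (-1 : ℂ) ^ n * ((n : ℂ) + 1 / 2) ^ k * cexp (π * I * τ * (n * (n + 1) : ℤ)) := fun τ n => by
    rw [thTerm, mul_left_comm, ← Complex.exp_add]
    congr 2
    push_cast; ring
  have hnorm : ∀ (τ : ℂ) (n : ℤ), ‖cexp (-(π * I * τ / 4)) * thTerm k τ 0 n‖ =
      |(n : ℝ) + 1 / 2| ^ k * Real.exp (-π * (τ.im * (n * (n + 1) : ℤ))) := fun τ n => by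
    rw [norm_mul, thTerm_norm, Complex.norm_exp, mul_left_comm, ← Real.exp_add]
    congr 2
    have : (-(π * I * τ / 4)).re = π * τ.im / 4 := by
      rw [show -(π * I * τ / 4) = ((-π / 4 : ℝ) : ℂ) * τ * I by push_cast; ring, mul_I_re,
        im_ofReal_mul]
      ring
    rw [this]; push_cast; simp; ring
  have hnn : ∀ n : ℤ, 0 ≤ n * (n + 1) := fun n => by
    rcases le_or_gt 0 n with h | h
    · positivity
    · nlinarith
  have hg : ∑' n, g n = 2 * (1 / 2 : ℂ) ^ k := by
    rw [tsum_eq_sum (s := {0, -1}) (fun n hn => by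
      simp only [Finset.mem_insert, Finset.mem_singleton] at hn
      simp [g, hn])]
    rw [Finset.sum_pair (by norm_num)]
    simp [g]; ring
  rw [← hg]
  simp only [th, ← tsum_mul_left]
  refine tendsto_tsum_of_dominated_convergence
    (bound := fun n => ‖cexp (-(π * I * I / 4)) * thTerm k I 0 n‖) ?_ ?_ ?_
  · exact ((summable_thTerm k (by simp) 0).mul_left _).norm
  · intro n
    by_cases hn : n = 0 ∨ n = -1
    · have : ∀ τ : ℍ, cexp (-(π * I * τ / 4)) * thTerm k τ 0 n = g n := fun τ => by
        rw [hform]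
        simp only [g, hn, if_true]
        rcases hn with rfl | rfl
        · simp
        · have : ((-1 : ℤ) : ℂ) + 1 / 2 = -(1 / 2) := by push_cast; ring
          rw [this, hk.neg_pow]
          simp
      simp only [this]
      exact tendsto_const_nhds
    · simp only [g, hn, if_false]
      rw [tendsto_zero_iff_norm_tendsto_zero]
      simp only [hnorm]
      have hpos : 0 < n * (n + 1) := by
        rcases (hnn n).lt_or_eq with h | h
        · exact h
        · exact absurd (by rcases mul_eq_zero.mp h.symm with h | h <;> omega) hn
      have hpos' : (0 : ℝ) < ((n * (n + 1) : ℤ) : ℝ) := by exact_mod_cast hpos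
      rw [show (0 : ℝ) = |(n : ℝ) + 1 / 2| ^ k * 0 by simp]
      refine Tendsto.const_mul _ (Real.tendsto_exp_atBot.comp ?_)
      have h1 : Tendsto (fun τ : ℍ => (τ : ℂ).im) atImInfty atTop := tendsto_comap
      exact (h1.atTop_mul_const hpos').const_mul_atTop_of_neg (by simp [Real.pi_pos])
  · have : ∀ᶠ τ : ℍ in atImInfty, 1 ≤ τ.im := (atImInfty_mem _).mpr ⟨1, fun _ h => h⟩
    filter_upwards [this] with τ hτ n
    rw [hnorm, hnorm]
    have h2 : (0 : ℝ) ≤ ((n * (n + 1) : ℤ) : ℝ) := by exact_mod_cast hnn n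
    refine mul_le_mul_of_nonneg_left (Real.exp_le_exp.mpr ?_) (by positivity)
    rw [neg_mul, neg_mul, neg_le_neg_iff]
    refine mul_le_mul_of_nonneg_left (mul_le_mul_of_nonneg_right ?_ h2) Real.pi_pos.le
    simpa using hτ

open UpperHalfPlane hiding I in
open scoped UpperHalfPlane in
open Filter Topology in
lemma tendsto_eJ : Tendsto (fun τ : ℍ => e2J τ) atImInfty (𝓝 1) ∧
    Tendsto (fun τ : ℍ => e4J τ) atImInfty (𝓝 1) ∧
    Tendsto (fun τ : ℍ => e6J τ) atImInfty (𝓝 1) := by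
  have hq : ∀ k, Odd k → Tendsto (fun τ : ℍ => thT τ k 0 / thT τ 1 0) atImInfty
      (𝓝 (2 * (1 / 2) ^ k)) := fun k hk => by
    have := (tendsto_th k hk).div (tendsto_th 1 (by decide)) (by norm_num)
    refine Tendsto.congr (fun τ => ?_) (this.trans_eq (by norm_num))
    simp only [Pi.div_apply, thT_zero, mul_div_mul_left _ _ (Complex.exp_ne_zero _)]
  have h3 := hq 3 (by decide)
  have h5 := hq 5 (by decide)
  have h7 := hq 7 (by decide)
  refine ⟨?_, ?_, ?_⟩
  · exact (h3.const_mul 4).trans_eq (by norm_num)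
  · exact (((h3.pow 2).const_mul 40).sub (h5.const_mul 24)).trans_eq (by norm_num)
  · exact ((((h3.pow 3).const_mul 280).sub ((h3.const_mul 252).mul h5)).add
      (h7.const_mul 36)).trans_eq (by norm_num)

open UpperHalfPlane hiding I in
open scoped UpperHalfPlane in
open Filter Topology in
/-- The nonconstant part of the Eisenstein series vanishes at the cusp. -/
lemma tendsto_qseries (k : ℕ) : Tendsto (fun τ : ℍ => ∑' n : ℕ, (sigmaD k (n + 1) : ℂ) *
    cexp (2 * π * I * τ * (n + 1))) atImInfty (𝓝 0) := by
  have hnorm : ∀ (τ : ℂ) (n : ℕ), ‖(sigmaD k (n + 1) : ℂ) * cexp (2 * π * I * τ * (n + 1))‖ =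
      sigmaD k (n + 1) * Real.exp (-(2 * π * (n + 1)) * τ.im) := fun τ n => by
    rw [norm_mul, Complex.norm_natCast, Complex.norm_exp]
    congr 2
    rw [show 2 * π * I * τ * (n + 1) = ((2 * π * (n + 1) : ℝ) : ℂ) * τ * I by push_cast; ring,
      mul_I_re, im_ofReal_mul]
    ring
  have hle : ∀ n, sigmaD k n ≤ n ^ (k + 1) := fun n => by
    calc sigmaD k n ≤ ∑ d ∈ n.divisors, n ^ k :=
          Finset.sum_le_sum fun d hd => Nat.pow_le_pow_left (Nat.divisor_le hd) k
      _ = n.divisors.card * n ^ k := by simp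
      _ ≤ n * n ^ k := Nat.mul_le_mul_right _ (Nat.card_divisors_le_self n)
      _ = _ := by ring
  rw [show (0 : ℂ) = ∑' n : ℕ, 0 by simp]
  refine tendsto_tsum_of_dominated_convergence
    (bound := fun n : ℕ => ((n + 1 : ℕ) : ℝ) ^ (k + 1) * Real.exp (-(2 * π)) ^ (n + 1)) ?_ ?_ ?_
  · have hr : ‖Real.exp (-(2 * π))‖ < 1 := by
      rw [Real.norm_eq_abs, abs_of_pos (Real.exp_pos _), Real.exp_lt_one_iff]
      linarith [Real.pi_pos]
    exact (summable_nat_add_iff (f := fun n : ℕ => (n : ℝ) ^ (k + 1) * Real.exp (-(2 * π)) ^ n) 1).mpr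
      (summable_pow_mul_geometric_of_norm_lt_one (k + 1) hr)
  · intro n
    rw [tendsto_zero_iff_norm_tendsto_zero]
    simp only [hnorm]
    rw [show (0 : ℝ) = sigmaD k (n + 1) * 0 by simp]
    refine Tendsto.const_mul _ (Real.tendsto_exp_atBot.comp ?_)
    have h1 : Tendsto (fun τ : ℍ => (τ : ℂ).im) atImInfty atTop := tendsto_comap
    exact h1.const_mul_atTop_of_neg (by have := Real.pi_pos; simp; positivity)
  · have : ∀ᶠ τ : ℍ in atImInfty, 1 ≤ τ.im := (atImInfty_mem _).mpr ⟨1, fun _ h => h⟩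
    filter_upwards [this] with τ hτ n
    rw [hnorm, ← Real.exp_nat_mul]
    refine mul_le_mul (by exact_mod_cast hle (n + 1)) (Real.exp_le_exp.mpr ?_)
      (Real.exp_pos _).le (by positivity)
    have : 2 * π * ((n : ℝ) + 1) * 1 ≤ 2 * π * ((n : ℝ) + 1) * τ.im := by gcongr
    change _ * τ.im ≤ _
    push_cast
    linarith

/-! ### Identification with the Eisenstein series -/

lemma differentiableAt_th (k : ℕ) {τ : ℂ} (hτ : 0 < τ.im) :
    DifferentiableAt ℂ (fun t => th k t 0) τ := (th_hasDerivAt_tau k hτ 0).differentiableAt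

lemma differentiableAt_eJ {τ : ℂ} (hτ : 0 < τ.im) :
    DifferentiableAt ℂ e2J τ ∧ DifferentiableAt ℂ e4J τ ∧ DifferentiableAt ℂ e6J τ := by
  have h : ∀ k, DifferentiableAt ℂ (fun t => th k t 0 / th 1 t 0) τ := fun k =>
    (differentiableAt_th k hτ).div (differentiableAt_th 1 hτ) (th_one_zero_ne hτ)
  have h3 := h 3
  have h5 := h 5
  have h7 := h 7
  refine ⟨?_, ?_, ?_⟩
  · have : e2J = fun t => 4 * (th 3 t 0 / th 1 t 0) := by
      funext t; simp only [e2J, wE2, thT_zero]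
    rw [this]; fun_prop
  · have : e4J = fun t => 40 * (th 3 t 0 / th 1 t 0) ^ 2 - 24 * (th 5 t 0 / th 1 t 0) := by
      funext t; simp only [e4J, wE4, thT_zero]
    rw [this]; fun_prop
  · have : e6J = fun t => 280 * (th 3 t 0 / th 1 t 0) ^ 3 -
        252 * (th 3 t 0 / th 1 t 0) * (th 5 t 0 / th 1 t 0) + 36 * (th 7 t 0 / th 1 t 0) := by
      funext t; simp only [e6J, wE6, thT_zero]
    rw [this]; fun_prop

open UpperHalfPlane hiding I in
open scoped UpperHalfPlane in
open Filter Topology Manifold in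
lemma mdiff_of_differentiableAt {f : ℂ → ℂ} (hf : ∀ τ : ℂ, 0 < τ.im → DifferentiableAt ℂ f τ) :
    MDiff (fun τ : ℍ => f τ) := by
  rw [UpperHalfPlane.mdifferentiable_iff]
  intro z hz
  refine ((hf z hz).differentiableWithinAt).congr (fun w hw => ?_) ?_ 
  · simp [ofComplex_apply_of_im_pos (show 0 < w.im from hw)]
  · simp [ofComplex_apply_of_im_pos (show 0 < z.im from hz)]

open UpperHalfPlane ModularForm in
lemma sub_slash_SL (k : ℤ) (γ : Matrix.SpecialLinearGroup (Fin 2) ℤ) (f g : ℍ → ℂ) :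
    (f - g) ∣[k] γ = f ∣[k] γ - g ∣[k] γ := by
  rw [sub_eq_add_neg, SlashAction.add_slash, SlashAction.neg_slash, sub_eq_add_neg]

open UpperHalfPlane ModularForm in
lemma slash_levelOne {k : ℤ} (F : ModularForm
      (Matrix.SpecialLinearGroup.mapGL ℝ : Matrix.SpecialLinearGroup (Fin 2) ℤ →* _).range k)
    (γ : Matrix.SpecialLinearGroup (Fin 2) ℤ) : (F : ℍ → ℂ) ∣[k] γ = F :=
  F.slash_action_eq' _ ⟨γ, rfl⟩

lemma sigmaD_eq (k n : ℕ) : sigmaD k n = ArithmeticFunction.sigma k n := by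
  rw [ArithmeticFunction.sigma_apply]; rfl

open UpperHalfPlane hiding I in
open scoped UpperHalfPlane in
lemma Eis2_eq (τ : ℍ) : Eis2 τ = EisensteinSeries.E2 τ := by
  rw [EisensteinSeries.E2_eq_tsum_cexp, Eis2,
    tsum_pnat_eq_tsum_succ (f := fun n => (ArithmeticFunction.sigma 1 n : ℂ) *
      cexp (2 * π * I * τ) ^ n)]
  congr 2
  refine tsum_congr fun n => ?_
  rw [sigmaD_eq, ← Complex.exp_nat_mul]
  congr 2
  push_cast; ring

open UpperHalfPlane hiding I in
open scoped UpperHalfPlane in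
lemma Eis4_eq (τ : ℍ) : Eis4 τ = ModularForm.E₄ τ := by
  have h := EisensteinSeries.q_expansion_bernoulli (k := 4) (by norm_num) (by decide) τ
  have hb : bernoulli 4 = -1 / 30 := by
    rw [bernoulli_eq_bernoulli'_of_ne_one (by norm_num), bernoulli'_four]
  rw [hb, tsum_pnat_eq_tsum_succ (f := fun n => (ArithmeticFunction.sigma (4 - 1) n : ℂ) *
      cexp (2 * π * I * τ) ^ (n : ℤ))] at h
  refine Eq.trans ?_ h.symm
  have hs : (∑' n : ℕ, (ArithmeticFunction.sigma (4 - 1) (n + 1) : ℂ) *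
      cexp (2 * π * I * τ) ^ ((n + 1 : ℕ) : ℤ)) =
      ∑' n : ℕ, (sigmaD 3 (n + 1) : ℂ) * cexp (2 * π * I * τ * (n + 1)) := by
    refine tsum_congr fun n => ?_
    rw [sigmaD_eq, zpow_natCast, ← Complex.exp_nat_mul]
    congr 2
    push_cast; ring
  rw [hs, Eis4]
  push_cast; ring

open UpperHalfPlane hiding I in
open scoped UpperHalfPlane in
lemma Eis6_eq (τ : ℍ) : Eis6 τ = ModularForm.E₆ τ := by
  have h := EisensteinSeries.q_expansion_bernoulli (k := 6) (by norm_num) (by decide) τ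
  have h5 : bernoulli' 5 = 0 := bernoulli'_eq_zero_of_odd (by decide) (by norm_num)
  have hb : bernoulli 6 = 1 / 42 := by
    rw [bernoulli_eq_bernoulli'_of_ne_one (by norm_num), bernoulli'_def]
    norm_num [Finset.sum_range_succ, Nat.choose, h5]
  rw [hb, tsum_pnat_eq_tsum_succ (f := fun n => (ArithmeticFunction.sigma (6 - 1) n : ℂ) *
      cexp (2 * π * I * τ) ^ (n : ℤ))] at h
  refine Eq.trans ?_ h.symm
  have hs : (∑' n : ℕ, (ArithmeticFunction.sigma (6 - 1) (n + 1) : ℂ) *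
      cexp (2 * π * I * τ) ^ ((n + 1 : ℕ) : ℤ)) =
      ∑' n : ℕ, (sigmaD 5 (n + 1) : ℂ) * cexp (2 * π * I * τ * (n + 1)) := by
    refine tsum_congr fun n => ?_
    rw [sigmaD_eq, zpow_natCast, ← Complex.exp_nat_mul]
    congr 2
    push_cast; ring
  rw [hs, Eis6]
  push_cast; ring

open UpperHalfPlane hiding I in
open scoped UpperHalfPlane in
open Filter Topology Manifold ModularForm ModularGroup in
lemma Eis2_eq_e2J {τ : ℂ} (hτ : 0 < τ.im) : Eis2 τ = e2J τ := by
  have key : (fun τ : ℍ => e2J τ) - EisensteinSeries.E2 = 0 := by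
    refine levelOne_eq_zero (k := 2) (by norm_num) ?_ ?_ ?_ ?_
    · exact (mdiff_of_differentiableAt fun τ h => (differentiableAt_eJ h).1).sub
        E2_mdifferentiable
    · rw [sub_slash_SL, EisensteinSeries.E2_slash_action]
      funext τ
      have h := slash_S_eq (k := 2) (f := fun τ : ℍ => e2J τ) τ
      have h0 : (τ : ℂ) ≠ 0 := τ.ne_zero
      have hpi : (π : ℂ) ≠ 0 := by exact_mod_cast Real.pi_ne_zero
      simp only [Nat.cast_ofNat] at h
      simp only [Pi.sub_apply, Pi.smul_apply, h, coe_S_smul, (eJ_inversion τ.im_pos).1,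
        EisensteinSeries.D2_S, riemannZeta_two, smul_eq_mul]
      field_simp
      linear_combination 12 * Complex.I_sq
    · rw [sub_slash_SL, EisensteinSeries.E2_slash_action, EisensteinSeries.D2_T]
      funext τ
      simp only [smul_zero, sub_zero, Pi.sub_apply, slash_T_eq, coe_T_smul, (eJ_add_one _).1]
    · have h : Tendsto EisensteinSeries.E2 atImInfty (𝓝 1) := by
        have := ((tendsto_qseries 1).const_mul 24).const_sub 1
        refine Tendsto.congr (fun τ => ?_) (this.trans_eq (by norm_num))
        rw [← Eis2_eq]; rfl
      exact (tendsto_eJ.1.sub h).trans_eq (by norm_num)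
  have := congrFun key ⟨τ, hτ⟩
  have h2 := Eis2_eq ⟨τ, hτ⟩
  exact h2.trans (sub_eq_zero.mp this).symm

open UpperHalfPlane hiding I in
open scoped UpperHalfPlane in
open Filter Topology Manifold ModularForm ModularGroup in
lemma Eis4_eq_e4J {τ : ℂ} (hτ : 0 < τ.im) : Eis4 τ = e4J τ := by
  have key : (fun τ : ℍ => e4J τ) - (ModularForm.E₄ : ℍ → ℂ) = 0 := by
    refine levelOne_eq_zero (k := 4) (by norm_num) ?_ ?_ ?_ ?_
    · exact (mdiff_of_differentiableAt fun τ h => (differentiableAt_eJ h).2.1).sub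
        (ModularForm.E₄).holo'
    · rw [sub_slash_SL, slash_levelOne]
      congr 1
      funext τ
      have h := slash_S_eq (k := 4) (f := fun τ : ℍ => e4J τ) τ
      have h0 : (τ : ℂ) ≠ 0 := τ.ne_zero
      simp only [Nat.cast_ofNat] at h
      simp only [h, coe_S_smul, (eJ_inversion τ.im_pos).2.1]
      field_simp
    · rw [sub_slash_SL, slash_levelOne]
      funext τ
      simp only [Pi.sub_apply, slash_T_eq, coe_T_smul, (eJ_add_one _).2.1]
    · have h : Tendsto ModularForm.E₄ atImInfty (𝓝 1) := by
        have := ((tendsto_qseries 3).const_mul 240).const_add 1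
        refine Tendsto.congr (fun τ => ?_) (this.trans_eq (by norm_num))
        rw [← Eis4_eq]; rfl
      exact (tendsto_eJ.2.1.sub h).trans_eq (by norm_num)
  have := congrFun key ⟨τ, hτ⟩
  have h2 := Eis4_eq ⟨τ, hτ⟩
  exact h2.trans (sub_eq_zero.mp this).symm

open UpperHalfPlane hiding I in
open scoped UpperHalfPlane in
open Filter Topology Manifold ModularForm ModularGroup in
lemma Eis6_eq_e6J {τ : ℂ} (hτ : 0 < τ.im) : Eis6 τ = e6J τ := by
  have key : (fun τ : ℍ => e6J τ) - (ModularForm.E₆ : ℍ → ℂ) = 0 := by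
    refine levelOne_eq_zero (k := 6) (by norm_num) ?_ ?_ ?_ ?_
    · exact (mdiff_of_differentiableAt fun τ h => (differentiableAt_eJ h).2.2).sub
        (ModularForm.E₆).holo'
    · rw [sub_slash_SL, slash_levelOne]
      congr 1
      funext τ
      have h := slash_S_eq (k := 6) (f := fun τ : ℍ => e6J τ) τ
      have h0 : (τ : ℂ) ≠ 0 := τ.ne_zero
      simp only [Nat.cast_ofNat] at h
      simp only [h, coe_S_smul, (eJ_inversion τ.im_pos).2.2]
      field_simp
    · rw [sub_slash_SL, slash_levelOne]
      funext τ
      simp only [Pi.sub_apply, slash_T_eq, coe_T_smul, (eJ_add_one _).2.2]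
    · have h : Tendsto ModularForm.E₆ atImInfty (𝓝 1) := by
        have := ((tendsto_qseries 5).const_mul 504).const_sub 1
        refine Tendsto.congr (fun τ => ?_) (this.trans_eq (by norm_num))
        rw [← Eis6_eq]; rfl
      exact (tendsto_eJ.2.2.sub h).trans_eq (by norm_num)
  have := congrFun key ⟨τ, hτ⟩
  have h2 := Eis6_eq ⟨τ, hτ⟩
  exact h2.trans (sub_eq_zero.mp this).symm

/-! ### Derivatives of `℘` and formulas of Ramanujan -/

/-- The Weierstrass function of the lattice `ℤ + ℤτ`, scaled by `(2πi)⁻²`. -/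
def PJ (τ z : ℂ) : ℂ := wP (thT τ) (2 * π * I * z)

/-- The normalized `z`-derivative of `PJ`. -/
def QJ (τ z : ℂ) : ℂ := wQ (thT τ) (2 * π * I * z)

/-- The normalized logarithmic `z`-derivative of `ϑ`. -/
def JJ (τ z : ℂ) : ℂ := th 1 τ z / th 0 τ z

/-- The eighth power of `ϑ(τ,z)/ϑ'(τ,0)`, a form of weight `-8` and index `4`. -/
def KJ (τ z : ℂ) : ℂ := (th 0 τ z / th 1 τ 0) ^ 8

lemma e2J_eq (τ : ℂ) : e2J τ = 4 * (th 3 τ 0 / th 1 τ 0) := by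
  simp only [e2J, wE2, thT_zero]

lemma e4J_eq (τ : ℂ) : e4J τ = 40 * (th 3 τ 0 / th 1 τ 0) ^ 2 - 24 * (th 5 τ 0 / th 1 τ 0) := by
  simp only [e4J, wE4, thT_zero]

lemma e6J_eq (τ : ℂ) : e6J τ = 280 * (th 3 τ 0 / th 1 τ 0) ^ 3 -
    252 * (th 3 τ 0 / th 1 τ 0) * (th 5 τ 0 / th 1 τ 0) + 36 * (th 7 τ 0 / th 1 τ 0) := by
  simp only [e6J, wE6, thT_zero]

lemma PJ_eq (τ z : ℂ) : PJ τ z =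
    th 3 τ 0 / th 1 τ 0 / 3 - (th 0 τ z * th 2 τ z - th 1 τ z ^ 2) / th 0 τ z ^ 2 := by
  simp only [PJ, wP, wE2, UT_zero, thT_apply, thT_zero]
  ring

lemma QJ_eq (τ z : ℂ) : QJ τ z =
    -(th 0 τ z * (th 0 τ z * th 3 τ z - th 1 τ z * th 2 τ z)
      - 2 * th 1 τ z * (th 0 τ z * th 2 τ z - th 1 τ z ^ 2)) / th 0 τ z ^ 3 := by
  simp only [QJ, wQ, UT_zero, UT_one, thT_apply]

lemma QJ_sq {τ z : ℂ} (hτ : 0 < τ.im) (hz : th 0 τ z ≠ 0) :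
    QJ τ z ^ 2 = 4 * PJ τ z ^ 3 - e4J τ / 12 * PJ τ z + e6J τ / 216 :=
  (oddTheta_thT hτ).wQ_sq (by rwa [thT_apply])

lemma hasDerivAt_scale {f : ℂ → ℂ} {f' z : ℂ} (h : HasDerivAt f f' (2 * π * I * z)) :
    HasDerivAt (fun w => f (2 * π * I * w)) (2 * π * I * f') z := by
  have h1 : HasDerivAt (fun w : ℂ => 2 * π * I * w) (2 * π * I) z := by
    simpa using (hasDerivAt_id z).const_mul (2 * π * I : ℂ)
  exact (h.comp z h1).congr_deriv (mul_comm _ _)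

lemma PJ_z {τ z : ℂ} (hτ : 0 < τ.im) (hz : th 0 τ z ≠ 0) :
    HasDerivAt (PJ τ) (2 * π * I * QJ τ z) z :=
  hasDerivAt_scale (wP_hasDerivAt (oddTheta_thT hτ).tower (by rwa [thT_apply]))

lemma QJ_z {τ z : ℂ} (hτ : 0 < τ.im) (hz : th 0 τ z ≠ 0) :
    HasDerivAt (QJ τ) (2 * π * I * (6 * PJ τ z ^ 2 - e4J τ / 24)) z :=
  hasDerivAt_scale ((oddTheta_thT hτ).wQ_hasDerivAt (by rwa [thT_apply]))

lemma JJ_z {τ z : ℂ} (hτ : 0 < τ.im) (hz : th 0 τ z ≠ 0) :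
    HasDerivAt (JJ τ) (2 * π * I * (e2J τ / 12 - PJ τ z)) z := by
  refine ((th_hasDerivAt_z 1 hτ z).div (th_hasDerivAt_z 0 hτ z) hz).congr_deriv ?_
  rw [e2J_eq, PJ_eq]
  simp only [zero_add, Nat.reduceAdd]
  generalize th 3 τ 0 / th 1 τ 0 = a
  field_simp
  ring

lemma KJ_z {τ z : ℂ} (hτ : 0 < τ.im) (hz : th 0 τ z ≠ 0) :
    HasDerivAt (KJ τ) (2 * π * I * (8 * JJ τ z * KJ τ z)) z := by
  refine (((th_hasDerivAt_z 0 hτ z).div_const (th 1 τ 0)).pow 8).congr_deriv ?_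
  have := th_one_zero_ne hτ
  simp only [zero_add, KJ, JJ]
  push_cast
  field_simp

lemma th_tau (k : ℕ) {τ : ℂ} (hτ : 0 < τ.im) (z : ℂ) :
    HasDerivAt (fun t => th k t z) (2 * π * I * (th (k + 2) τ z / 2)) τ :=
  (th_hasDerivAt_tau k hτ z).congr_deriv (by ring)

lemma KJ_tau {τ z : ℂ} (hτ : 0 < τ.im) (hz : th 0 τ z ≠ 0) :
    HasDerivAt (fun t => KJ t z)
      (2 * π * I * (KJ τ z * (4 * (JJ τ z ^ 2 + e2J τ / 12 - PJ τ z) - e2J τ))) τ := by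
  have h1 := th_one_zero_ne hτ
  refine (((th_tau 0 hτ z).div (th_tau 1 hτ 0) h1).pow 8).congr_deriv ?_
  simp only [zero_add, KJ, JJ, e2J_eq, PJ_eq, Nat.reduceAdd, Pi.div_apply]
  push_cast
  field_simp
  ring

lemma a_tau (k : ℕ) {τ : ℂ} (hτ : 0 < τ.im) : HasDerivAt (fun t => th k t 0 / th 1 t 0)
    (2 * π * I * ((th (k + 2) τ 0 / th 1 τ 0
      - th k τ 0 / th 1 τ 0 * (th 3 τ 0 / th 1 τ 0)) / 2)) τ := by
  have h1 := th_one_zero_ne hτ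
  refine ((th_tau k hτ 0).div (th_tau 1 hτ 0) h1).congr_deriv ?_
  simp only [Nat.reduceAdd]
  field_simp

lemma e2J_tau {τ : ℂ} (hτ : 0 < τ.im) :
    HasDerivAt e2J (2 * π * I * ((e2J τ ^ 2 - e4J τ) / 12)) τ := by
  rw [funext e2J_eq]
  refine ((a_tau 3 hτ).const_mul 4).congr_deriv ?_
  rw [e4J_eq]
  ring

lemma e4J_tau {τ : ℂ} (hτ : 0 < τ.im) :
    HasDerivAt e4J (2 * π * I * ((e2J τ * e4J τ - e6J τ) / 3)) τ := by
  rw [funext e4J_eq]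
  refine ((((a_tau 3 hτ).pow 2).const_mul 40).sub ((a_tau 5 hτ).const_mul 24)).congr_deriv ?_
  rw [e2J_eq, e6J_eq]
  simp only [Nat.reduceAdd]
  push_cast
  ring

/-- The heat equation turns `∂℘/∂τ` into `z`-derivatives of `ϑ`, of which the fourth is eliminated
by `R4`. -/
lemma PJ_tau {τ z : ℂ} (hτ : 0 < τ.im) (hz : th 0 τ z ≠ 0) :
    HasDerivAt (fun t => PJ t z) (2 * π * I * (2 * PJ τ z ^ 2 + e2J τ * PJ τ z / 6
      - e4J τ / 36 + JJ τ z * QJ τ z)) τ := by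
  have h1 := th_one_zero_ne hτ
  have e := (oddTheta_thT hτ).R4 (by rwa [thT_zero]) (2 * π * I * z)
  simp only [PJ_eq]
  have := ((a_tau 3 hτ).div_const 3).sub ((((th_tau 0 hτ z).mul (th_tau 2 hτ z)).sub
    ((th_tau 1 hτ z).pow 2)).div ((th_tau 0 hτ z).pow 2) (pow_ne_zero 2 hz))
  refine this.congr_deriv ?_
  simp only [UT_zero, thT_apply, thT_zero] at e
  simp only [zero_add, JJ, QJ_eq, e2J_eq, e4J_eq, Nat.reduceAdd, Pi.pow_apply, Pi.mul_apply,
    Pi.sub_apply]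
  generalize th 3 τ 0 / th 1 τ 0 = a at *
  generalize th 5 τ 0 / th 1 τ 0 = b at *
  push_cast
  have e4 : th 4 τ z = (4 * th 1 τ z * th 3 τ z - 3 * th 2 τ z ^ 2
      + 4 * a * (th 0 τ z * th 2 τ z - th 1 τ z ^ 2) - (b - a ^ 2) * th 0 τ z ^ 2) / th 0 τ z := by
    rw [eq_div_iff hz]
    linear_combination e
  rw [e4]
  field_simp
  ring

lemma QJ_tau {τ z : ℂ} (hτ : 0 < τ.im) (hz : th 0 τ z ≠ 0) :
    HasDerivAt (fun t => QJ t z) (2 * π * I * (3 * PJ τ z * QJ τ z + e2J τ * QJ τ z / 4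
      + JJ τ z * (6 * PJ τ z ^ 2 - e4J τ / 24))) τ := by
  have h1 := th_one_zero_ne hτ
  have e := (oddTheta_thT hτ).R4 (by rwa [thT_zero]) (2 * π * I * z)
  have e5 := ((oddTheta_thT hτ).R4_deriv (by rwa [thT_zero]) (2 * π * I * z)).1
  simp only [QJ_eq]
  have h0 := th_tau 0 hτ z
  have h1' := th_tau 1 hτ z
  have h2 := th_tau 2 hτ z
  have := (((h0.mul ((h0.mul (th_tau 3 hτ z)).sub (h1'.mul h2))).sub
    ((h1'.const_mul 2).mul ((h0.mul h2).sub (h1'.pow 2)))).neg).div (h0.pow 3) (pow_ne_zero 3 hz)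
  refine this.congr_deriv ?_
  simp only [UT_zero, UT_one, thT_apply, thT_zero] at e e5
  simp only [zero_add, JJ, PJ_eq, e2J_eq, e4J_eq, Nat.reduceAdd, Pi.pow_apply, Pi.mul_apply,
    Pi.sub_apply, Pi.neg_apply]
  generalize th 3 τ 0 / th 1 τ 0 = a at *
  generalize th 5 τ 0 / th 1 τ 0 = b at *
  push_cast
  have e4 : th 4 τ z = (4 * th 1 τ z * th 3 τ z - 3 * th 2 τ z ^ 2
      + 4 * a * (th 0 τ z * th 2 τ z - th 1 τ z ^ 2) - (b - a ^ 2) * th 0 τ z ^ 2) / th 0 τ z := by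
    rw [eq_div_iff hz]
    linear_combination e
  have e5' : th 5 τ z = (3 * th 1 τ z * th 4 τ z - 2 * th 2 τ z * th 3 τ z
      + 4 * a * (th 0 τ z * th 3 τ z - th 1 τ z * th 2 τ z)
      - (b - a ^ 2) * (2 * th 0 τ z * th 1 τ z)) / th 0 τ z := by
    rw [eq_div_iff hz]
    linear_combination e5
  rw [e5', e4]
  field_simp
  ring

lemma eventually_tau {τ z : ℂ} (hτ : 0 < τ.im) (hz : th 0 τ z ≠ 0) :
    ∀ᶠ t in nhds τ, 0 < t.im ∧ th 0 t z ≠ 0 :=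
  ((isOpen_lt continuous_const Complex.continuous_im).eventually_mem hτ).and
    ((th_tau 0 hτ z).continuousAt.eventually_ne hz)

lemma eventually_z {τ z : ℂ} (hτ : 0 < τ.im) (hz : th 0 τ z ≠ 0) :
    ∀ᶠ w in nhds z, th 0 τ w ≠ 0 :=
  (th_hasDerivAt_z 0 hτ z).continuousAt.eventually_ne hz

/-- Ramanujan's formula for `E₆'`, obtained by differentiating the Weierstrass equation
with respect to `τ`. -/
lemma e6J_tau {τ : ℂ} (hτ : 0 < τ.im) :
    HasDerivAt e6J (2 * π * I * ((e2J τ * e6J τ - e4J τ ^ 2) / 2)) τ := by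
  obtain ⟨z, hz⟩ := exists_th_ne_zero hτ
  have hev : e6J =ᶠ[nhds τ]
      fun t => 216 * (QJ t z ^ 2 - 4 * PJ t z ^ 3 + e4J t * PJ t z / 12) := by
    filter_upwards [eventually_tau hτ hz] with t ht
    linear_combination (-216) * QJ_sq ht.1 ht.2
  refine HasDerivAt.congr_of_eventuallyEq ?_ hev
  have hP := PJ_tau hτ hz
  refine (((((QJ_tau hτ hz).pow 2).sub ((hP.pow 3).const_mul 4)).add
    (((e4J_tau hτ).mul hP).div_const 12)).const_mul 216).congr_deriv ?_
  have hq := QJ_sq hτ hz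
  push_cast
  linear_combination (2 * π * I * 216 * (6 * PJ τ z + e2J τ / 2)) * hq

/-! ### The heat operator on polynomials in `℘` -/

/-- `f` has weight `w` as far as differentiation is concerned: its normalized `τ`-derivative is
`w/12·E₂·f + r`, so that `r` is the Serre derivative of `f`. -/
def HasSerre (w : ℂ) (f r : ℂ → ℂ) : Prop :=
  ∀ τ : ℂ, 0 < τ.im → HasDerivAt f (2 * π * I * (w / 12 * e2J τ * f τ + r τ)) τ

namespace HasSerre

lemma zero (w : ℂ) : HasSerre w (fun _ => 0) (fun _ => 0) := fun τ _ =>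
  (hasDerivAt_const τ (0 : ℂ)).congr_deriv (by simp)

lemma const (c : ℂ) : HasSerre 0 (fun _ => c) (fun _ => 0) := fun τ _ =>
  (hasDerivAt_const τ c).congr_deriv (by simp)

lemma e4 : HasSerre 4 e4J (fun τ => -e6J τ / 3) := fun _ hτ =>
  (e4J_tau hτ).congr_deriv (by ring)

lemma e6 : HasSerre 6 e6J (fun τ => -e4J τ ^ 2 / 2) := fun _ hτ =>
  (e6J_tau hτ).congr_deriv (by ring)

lemma mul {v w : ℂ} {f g r s : ℂ → ℂ} (hf : HasSerre v f r) (hg : HasSerre w g s) :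
    HasSerre (v + w) (fun τ => f τ * g τ) (fun τ => r τ * g τ + f τ * s τ) := fun τ hτ =>
  ((hf τ hτ).mul (hg τ hτ)).congr_deriv (by ring)

lemma add {w : ℂ} {f g r s : ℂ → ℂ} (hf : HasSerre w f r) (hg : HasSerre w g s) :
    HasSerre w (fun τ => f τ + g τ) (fun τ => r τ + s τ) := fun τ hτ =>
  ((hf τ hτ).add (hg τ hτ)).congr_deriv (by ring)

lemma const_mul {w : ℂ} {f r : ℂ → ℂ} (c : ℂ) (hf : HasSerre w f r) :
    HasSerre w (fun τ => c * f τ) (fun τ => c * r τ) := fun τ hτ =>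
  ((hf τ hτ).const_mul c).congr_deriv (by ring)

lemma congr {v w : ℂ} {f r s : ℂ → ℂ} (hf : HasSerre v f r) (hw : v = w)
    (hr : ∀ τ, r τ = s τ) : HasSerre w f s := fun τ hτ =>
  (hf τ hτ).congr_deriv (by rw [hw, hr])

end HasSerre

/-- The action of the modular heat operator on forms `K·∑ cᵢ ℘ⁱ` of degree at most `4` in `℘`.
The logarithmic derivative of `ϑ` and `E₂` cancel because the `cᵢ` have the right weights, and the
terms of degree `5` cancel because the index is `4`. -/
lemma heat_step (k : ℚ) {φ : ℂ → ℂ → ℂ} {c₀ c₁ c₂ c₃ c₄ r₀ r₁ r₂ r₃ r₄ : ℂ → ℂ}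
    (hφ : ∀ τ z, 0 < τ.im → th 0 τ z ≠ 0 → φ τ z = KJ τ z *
      (c₀ τ + c₁ τ * PJ τ z + c₂ τ * PJ τ z ^ 2 + c₃ τ * PJ τ z ^ 3 + c₄ τ * PJ τ z ^ 4))
    (h₀ : HasSerre (k + 8) c₀ r₀) (h₁ : HasSerre (k + 6) c₁ r₁) (h₂ : HasSerre (k + 4) c₂ r₂)
    (h₃ : HasSerre (k + 2) c₃ r₃) (h₄ : HasSerre k c₄ r₄)
    (τ z : ℂ) (hτ : 0 < τ.im) (hz : th 0 τ z ≠ 0) :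
    heatMod 4 k φ τ z = KJ τ z *
      ((12 * r₀ τ - 29 / 96 * e4J τ * c₁ τ - e6J τ / 144 * c₂ τ)
      + (12 * r₁ τ - 42 * c₀ τ - 23 / 48 * e4J τ * c₂ τ - e6J τ / 48 * c₃ τ) * PJ τ z
      + (12 * r₂ τ - 45 / 2 * c₁ τ - 17 / 32 * e4J τ * c₃ τ - e6J τ / 24 * c₄ τ) * PJ τ z ^ 2
      + (12 * r₃ τ - 9 * c₂ τ - 11 / 24 * e4J τ * c₄ τ) * PJ τ z ^ 3
      + (12 * r₄ τ - 3 / 2 * c₃ τ) * PJ τ z ^ 4) := by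
  have hev : (fun t => φ t z) =ᶠ[nhds τ] fun t => KJ t z *
      (c₀ t + c₁ t * PJ t z + c₂ t * PJ t z ^ 2 + c₃ t * PJ t z ^ 3 + c₄ t * PJ t z ^ 4) := by
    filter_upwards [eventually_tau hτ hz] with t ht using hφ t z ht.1 ht.2
  have hdτ : deriv (fun t => φ t z) τ = 2 * π * I * (KJ τ z *
      ((4 * (JJ τ z ^ 2 + e2J τ / 12 - PJ τ z) - e2J τ) * (c₀ τ + c₁ τ * PJ τ z
        + c₂ τ * PJ τ z ^ 2 + c₃ τ * PJ τ z ^ 3 + c₄ τ * PJ τ z ^ 4)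
      + ((k + 8) / 12 * e2J τ * c₀ τ + r₀ τ) + ((k + 6) / 12 * e2J τ * c₁ τ + r₁ τ) * PJ τ z
      + ((k + 4) / 12 * e2J τ * c₂ τ + r₂ τ) * PJ τ z ^ 2
      + ((k + 2) / 12 * e2J τ * c₃ τ + r₃ τ) * PJ τ z ^ 3
      + (k / 12 * e2J τ * c₄ τ + r₄ τ) * PJ τ z ^ 4
      + (c₁ τ + 2 * c₂ τ * PJ τ z + 3 * c₃ τ * PJ τ z ^ 2 + 4 * c₄ τ * PJ τ z ^ 3) *
        (2 * PJ τ z ^ 2 + e2J τ * PJ τ z / 6 - e4J τ / 36 + JJ τ z * QJ τ z))) := by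
    have hP := PJ_tau hτ hz
    refine (HasDerivAt.congr_of_eventuallyEq (((KJ_tau hτ hz).mul (((((h₀ τ hτ).add
      ((h₁ τ hτ).mul hP)).add ((h₂ τ hτ).mul (hP.pow 2))).add ((h₃ τ hτ).mul (hP.pow 3))).add
      ((h₄ τ hτ).mul (hP.pow 4))))) hev).deriv.trans ?_
    simp only [Pi.add_apply, Pi.pow_apply, Pi.mul_apply]
    push_cast
    ring
  have hdz : ∀ w, th 0 τ w ≠ 0 → HasDerivAt (φ τ) (2 * π * I * (KJ τ w * (8 * JJ τ w *
      (c₀ τ + c₁ τ * PJ τ w + c₂ τ * PJ τ w ^ 2 + c₃ τ * PJ τ w ^ 3 + c₄ τ * PJ τ w ^ 4)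
      + (c₁ τ + 2 * c₂ τ * PJ τ w + 3 * c₃ τ * PJ τ w ^ 2 + 4 * c₄ τ * PJ τ w ^ 3) * QJ τ w)))
      w := fun w hw => by
    have hev : φ τ =ᶠ[nhds w] fun w => KJ τ w * (c₀ τ + c₁ τ * PJ τ w + c₂ τ * PJ τ w ^ 2
        + c₃ τ * PJ τ w ^ 3 + c₄ τ * PJ τ w ^ 4) := by
      filter_upwards [eventually_z hτ hw] with t ht using hφ τ t hτ ht
    have hP := PJ_z hτ hw
    refine (((KJ_z hτ hw).mul ((((((hasDerivAt_const w (c₀ τ)).add (hP.const_mul _)).add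
      ((hP.pow 2).const_mul _))).add ((hP.pow 3).const_mul _)).add
      ((hP.pow 4).const_mul _))).congr_of_eventuallyEq hev).congr_deriv ?_
    simp only [Pi.add_apply, Pi.pow_apply]
    push_cast
    ring
  have hev2 : deriv (φ τ) =ᶠ[nhds z] fun w => 2 * π * I * (KJ τ w * (8 * JJ τ w *
      (c₀ τ + c₁ τ * PJ τ w + c₂ τ * PJ τ w ^ 2 + c₃ τ * PJ τ w ^ 3 + c₄ τ * PJ τ w ^ 4)
      + (c₁ τ + 2 * c₂ τ * PJ τ w + 3 * c₃ τ * PJ τ w ^ 2 + 4 * c₄ τ * PJ τ w ^ 3) * QJ τ w)) := by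
    filter_upwards [eventually_z hτ hz] with w hw using (hdz w hw).deriv
  have hdzz : deriv (deriv (φ τ)) z = 2 * π * I * (2 * π * I * (KJ τ z *
      ((64 * JJ τ z ^ 2 + 8 * (e2J τ / 12 - PJ τ z)) * (c₀ τ + c₁ τ * PJ τ z
        + c₂ τ * PJ τ z ^ 2 + c₃ τ * PJ τ z ^ 3 + c₄ τ * PJ τ z ^ 4)
      + 16 * JJ τ z * QJ τ z *
        (c₁ τ + 2 * c₂ τ * PJ τ z + 3 * c₃ τ * PJ τ z ^ 2 + 4 * c₄ τ * PJ τ z ^ 3)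
      + (2 * c₂ τ + 6 * c₃ τ * PJ τ z + 12 * c₄ τ * PJ τ z ^ 2) * QJ τ z ^ 2
      + (c₁ τ + 2 * c₂ τ * PJ τ z + 3 * c₃ τ * PJ τ z ^ 2 + 4 * c₄ τ * PJ τ z ^ 3) *
        (6 * PJ τ z ^ 2 - e4J τ / 24)))) := by
    have hP := PJ_z hτ hz
    have hP1 := (((hasDerivAt_const z (c₁ τ)).add (hP.const_mul (2 * c₂ τ))).add
      ((hP.pow 2).const_mul (3 * c₃ τ))).add ((hP.pow 3).const_mul (4 * c₄ τ))
    have hP0 := ((((hasDerivAt_const z (c₀ τ)).add (hP.const_mul (c₁ τ))).add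
      ((hP.pow 2).const_mul (c₂ τ))).add ((hP.pow 3).const_mul (c₃ τ))).add
      ((hP.pow 4).const_mul (c₄ τ))
    refine (HasDerivAt.congr_of_eventuallyEq (((KJ_z hτ hz).mul
      ((((JJ_z hτ hz).const_mul 8).mul hP0).add (hP1.mul (QJ_z hτ hz)))).const_mul _)
      hev2).deriv.trans ?_
    simp only [Pi.add_apply, Pi.pow_apply, Pi.mul_apply]
    push_cast
    ring
  have hQ := QJ_sq hτ hz
  have hpi : (π : ℂ) ≠ 0 := by exact_mod_cast Real.pi_ne_zero
  have e1 : ∀ X : ℂ, 12 / (2 * π * I) * (2 * π * I * X) = 12 * X := fun X => by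
    field_simp
  have e2 : ∀ X : ℂ, 3 / (4 * π ^ 2 * (4 : ℚ)) * (2 * π * I * (2 * π * I * X)) = -3 / 4 * X :=
    fun X => by
      push_cast
      field_simp
      linear_combination 4 * X * Complex.I_sq
  rw [heatMod, heatOp, hdτ, hdzz, e1, e2, Eis2_eq_e2J hτ, hφ τ z hτ hz]
  generalize KJ τ z = K at *
  generalize JJ τ z = J at *
  generalize PJ τ z = P at *
  generalize QJ τ z = Q at *
  linear_combination (-3 / 4 * K * (2 * c₂ τ + 6 * c₃ τ * P + 12 * c₄ τ * P ^ 2)) * hQ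

/-- The triplication formula for `ϑ`. -/
lemma phi04_eq (τ z : ℂ) (hτ : 0 < τ.im) (hz : th 0 τ z ≠ 0) :
    phi04 τ z = KJ τ z * (-1 / 2304 * (e4J τ * e4J τ) + 1 / 72 * e6J τ * PJ τ z
      + -1 / 8 * e4J τ * PJ τ z ^ 2 + 0 * PJ τ z ^ 3 + 3 * PJ τ z ^ 4) := by
  have h := (oddTheta_thT hτ).triplication (x := 2 * π * I * z) (by rwa [thT_apply])
  rw [show 3 * (2 * π * I * z) = 2 * π * I * (3 * z) by ring, thT_apply, thT_apply, thT_zero] at h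
  rw [phi04, thetaJ_eq_th, thetaJ_eq_th, h]
  simp only [KJ, PJ, e4J, e6J]
  ring

lemma heat_phi04 (τ z : ℂ) (hτ : 0 < τ.im) (hz : th 0 τ z ≠ 0) :
    heatMod 4 0 phi04 τ z = KJ τ z * (1 / 6912 * (e4J τ * e6J τ)
      + -1 / 192 * (e4J τ * e4J τ) * PJ τ z + 1 / 16 * e6J τ * PJ τ z ^ 2
      + -1 / 4 * e4J τ * PJ τ z ^ 3 + 0 * PJ τ z ^ 4) := by
  rw [heat_step 0 phi04_eq
    (((HasSerre.e4.mul HasSerre.e4).const_mul (-1 / 2304)).congr (by norm_num) fun _ => rfl)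
    ((HasSerre.e6.const_mul (1 / 72)).congr (by norm_num) fun _ => rfl)
    ((HasSerre.e4.const_mul (-1 / 8)).congr (by norm_num) fun _ => rfl)
    (HasSerre.zero _) ((HasSerre.const 3).congr (by norm_num) fun _ => rfl) τ z hτ hz]
  ring

lemma heat_heat_phi04 (τ z : ℂ) (hτ : 0 < τ.im) (hz : th 0 τ z ≠ 0) :
    heatMod 4 2 (heatMod 4 0 phi04) τ z = KJ τ z *
      ((13 / 18432 * (e4J τ * (e4J τ * e4J τ)) + -7 / 6912 * (e6J τ * e6J τ))
      + 25 / 2304 * (e4J τ * e6J τ) * PJ τ z + -1 / 8 * (e4J τ * e4J τ) * PJ τ z ^ 2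
      + 7 / 16 * e6J τ * PJ τ z ^ 3 + 3 / 8 * e4J τ * PJ τ z ^ 4) := by
  rw [heat_step 2 heat_phi04
    (((HasSerre.e4.mul HasSerre.e6).const_mul (1 / 6912)).congr (by norm_num) fun _ => rfl)
    (((HasSerre.e4.mul HasSerre.e4).const_mul (-1 / 192)).congr (by norm_num) fun _ => rfl)
    ((HasSerre.e6.const_mul (1 / 16)).congr (by norm_num) fun _ => rfl)
    ((HasSerre.e4.const_mul (-1 / 4)).congr (by norm_num) fun _ => rfl)
    (HasSerre.zero _) τ z hτ hz]
  ring

lemma heat_heat_heat_phi04 (τ z : ℂ) (hτ : 0 < τ.im) (hz : th 0 τ z ≠ 0) :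
    heatMod 4 4 (heatMod 4 2 (heatMod 4 0 phi04)) τ z = KJ τ z *
      (283 / 221184 * e4J τ ^ 2 * e6J τ
      + (-107 / 3072 * e4J τ ^ 3 - 23 / 2304 * e6J τ ^ 2) * PJ τ z
      + 65 / 128 * e4J τ * e6J τ * PJ τ z ^ 2 - 107 / 64 * e4J τ ^ 2 * PJ τ z ^ 3
      - 69 / 32 * e6J τ * PJ τ z ^ 4) := by
  rw [heat_step 4 heat_heat_phi04
    ((((HasSerre.e4.mul (HasSerre.e4.mul HasSerre.e4)).const_mul (13 / 18432)).add
      (((HasSerre.e6.mul HasSerre.e6).congr (by norm_num) fun _ => rfl).const_mul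
        (-7 / 6912))).congr (by norm_num) fun _ => rfl)
    (((HasSerre.e4.mul HasSerre.e6).const_mul (25 / 2304)).congr (by norm_num) fun _ => rfl)
    (((HasSerre.e4.mul HasSerre.e4).const_mul (-1 / 8)).congr (by norm_num) fun _ => rfl)
    ((HasSerre.e6.const_mul (7 / 16)).congr (by norm_num) fun _ => rfl)
    ((HasSerre.e4.const_mul (3 / 8)).congr (by norm_num) fun _ => rfl) τ z hτ hz]
  ring

/-- degree-3 modular differential equation for `φ_{0,4}`:
`H^{(4)}_{4}H^{(4)}_{2}H^{(4)}_{0}(φ_{0,4}) − (107/16)·E₄·H^{(4)}_{0}(φ_{0,4})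
 + (23/32)·E₆·φ_{0,4} = 0` where `ϑ(τ,z) ≠ 0`. -/
theorem statement19 (τ z : ℂ) (hτ : 0 < τ.im) (hθ : thetaJ τ z ≠ 0) :
    heatMod 4 4 (heatMod 4 2 (heatMod 4 0 phi04)) τ z
      - (107/16) * Eis4 τ * heatMod 4 0 phi04 τ z
      + (23/32) * Eis6 τ * phi04 τ z = 0 := by
  rw [thetaJ_eq_th] at hθ
  rw [heat_heat_heat_phi04 τ z hτ hθ, heat_phi04 τ z hτ hθ, phi04_eq τ z hτ hθ,
    Eis4_eq_e4J hτ, Eis6_eq_e6J hτ]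
  ring
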